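/- arXiv:quant-ph/0302031 — 4 statements merged into one kernel-verified Lean document; each statement's English description precedes it below -/
import Mathlib

section
/- A linear map Φ on d×d complex matrices is entanglement breaking if and only if for every m ≥ 1 and every positivity-preserving linear map Υ from m×m complex matrices to d×d complex matrices, the composition Φ ∘ Υ is completely positive. (Equivalence (B) ⇔ (F) of Theorem 2.) -/
/-!
Both properties are equivalent to separability of the Choi matrix `C = ∑ E_{ij} ⊗ Φ(E_{ij})`.

If `C = ∑ A_k ⊗ B_k` is separable, then `Φ` has the measure-and-prepare form
`Φ(X) = ∑ φ_k(X) B_k` with positive functionals `φ_k` (`isMeasurePrepare_of_separable`). This form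
is inherited by `Φ ∘ Υ` for positive `Υ`, since `φ_k ∘ Υ` is again positive, and it makes the
output of `I_n ⊗ Ψ` separable (`IsMeasurePrepare.isSeparableMat_tensorId`), hence positive
semidefinite.

An entanglement breaking `Φ` has separable `C` because `C` is the image under `I ⊗ Φ` of the
positive semidefinite `|Ω⟩⟨Ω|`, `Ω = ∑ e_i ⊗ e_i`. Conversely, suppose every `Φ ∘ Υ` is completely
positive but `C` is not separable. Hahn-Banach separation of the normalised `C` from the convex
hull of the product states, which is compact by Carathéodory's theorem, gives an entanglement
witness `g` (`exists_witness`). The map `Υ(X)_{ij} = g(E_{ij} ⊗ X)` preserves positivity, while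
`⟨Ω|(I ⊗ Φ ∘ Υ)(|Ω⟩⟨Ω|)|Ω⟩ = g(C)` is not nonnegative, a contradiction
(`isSeparableMat_choiSum`).
-/

open Matrix Kronecker BigOperators ComplexOrder

noncomputable section

/-- Blockwise action of `I_n ⊗ Φ` on matrices indexed by `Fin n × Fin d`. -/
def tensorId (n : ℕ) {d e : ℕ}
    (Φ : Matrix (Fin d) (Fin d) ℂ → Matrix (Fin e) (Fin e) ℂ)
    (Γ : Matrix (Fin n × Fin d) (Fin n × Fin d) ℂ) :
    Matrix (Fin n × Fin e) (Fin n × Fin e) ℂ :=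
  fun p q => Φ (fun a b => Γ (p.1, a) (q.1, b)) p.2 q.2

/-- A matrix indexed by `Fin n × Fin d` is separable if it is a finite sum of Kronecker
products of positive semidefinite matrices. -/
def IsSeparableMat {n d : ℕ} (Γ : Matrix (Fin n × Fin d) (Fin n × Fin d) ℂ) : Prop :=
  ∃ (N : ℕ) (A : Fin N → Matrix (Fin n) (Fin n) ℂ)
    (B : Fin N → Matrix (Fin d) (Fin d) ℂ),
    (∀ i, (A i).PosSemidef) ∧ (∀ i, (B i).PosSemidef) ∧ Γ = ∑ i, (A i) ⊗ₖ (B i)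

/-- A map on `d × d` matrices is entanglement breaking if `I_n ⊗ Φ` sends every
positive semidefinite matrix to a separable one. -/
def EntBreaking {d : ℕ} (Φ : Matrix (Fin d) (Fin d) ℂ → Matrix (Fin d) (Fin d) ℂ) : Prop :=
  ∀ n : ℕ, 1 ≤ n → ∀ Γ : Matrix (Fin n × Fin d) (Fin n × Fin d) ℂ,
    Γ.PosSemidef → IsSeparableMat (tensorId n Φ Γ)

/-- Complete positivity: `I_n ⊗ Φ` preserves positive semidefiniteness for all `n ≥ 1`. -/
def CompletelyPositive {d e : ℕ}
    (Φ : Matrix (Fin d) (Fin d) ℂ → Matrix (Fin e) (Fin e) ℂ) : Prop :=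
  ∀ n : ℕ, 1 ≤ n → ∀ Γ : Matrix (Fin n × Fin d) (Fin n × Fin d) ℂ,
    Γ.PosSemidef → (tensorId n Φ Γ).PosSemidef

def TracePreserving {d : ℕ}
    (Φ : Matrix (Fin d) (Fin d) ℂ → Matrix (Fin d) (Fin d) ℂ) : Prop :=
  ∀ X, (Φ X).trace = X.trace

/-- The maximally entangled state `|β⟩⟨β|`. -/
def maxEnt (d : ℕ) : Matrix (Fin d × Fin d) (Fin d × Fin d) ℂ :=
  fun p q => if p.1 = p.2 ∧ q.1 = q.2 then (1 : ℂ) / d else 0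

/-- The Choi matrix `(I_d ⊗ Φ)(|β⟩⟨β|)`. -/
def choiMatrix {d : ℕ} (Φ : Matrix (Fin d) (Fin d) ℂ → Matrix (Fin d) (Fin d) ℂ) :
    Matrix (Fin d × Fin d) (Fin d × Fin d) ℂ :=
  tensorId d Φ (maxEnt d)

/-- The rank-one matrix `|v⟩⟨v|`. -/
def rankOne {d : ℕ} (v : Fin d → ℂ) : Matrix (Fin d) (Fin d) ℂ :=
  Matrix.vecMulVec v (star v)

/-- Completely positive trace-preserving (linear) maps. -/
def IsCPTP {d : ℕ} (Φ : Matrix (Fin d) (Fin d) ℂ → Matrix (Fin d) (Fin d) ℂ) : Prop :=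
  IsLinearMap ℂ Φ ∧ CompletelyPositive Φ ∧ TracePreserving Φ

/-- EBT maps: completely positive, trace-preserving, entanglement-breaking linear maps. -/
def IsEBT {d : ℕ} (Φ : Matrix (Fin d) (Fin d) ℂ → Matrix (Fin d) (Fin d) ℂ) : Prop :=
  IsCPTP Φ ∧ EntBreaking Φ

/-- `Φ` is an extreme point of the set of maps satisfying `P`. -/
def IsExtremePointOf {d : ℕ}
    (P : (Matrix (Fin d) (Fin d) ℂ → Matrix (Fin d) (Fin d) ℂ) → Prop)
    (Φ : Matrix (Fin d) (Fin d) ℂ → Matrix (Fin d) (Fin d) ℂ) : Prop :=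
  P Φ ∧ ∀ Φ₁ Φ₂, P Φ₁ → P Φ₂ → ∀ a : ℝ, 0 < a → a < 1 →
    Φ = (fun ρ => (a : ℂ) • Φ₁ ρ + ((1 - a : ℝ) : ℂ) • Φ₂ ρ) →
    Φ₁ = Φ ∧ Φ₂ = Φ

/-! ### Convexity and positivity -/

/-- In a finite-dimensional real normed space the convex hull of a compact set is compact: by
Carathéodory it is the image of `Δ × s ^ (dim + 1)`, with `Δ` the standard simplex. -/
lemma isCompact_convexHull_of_finiteDimensional {E : Type*} [NormedAddCommGroup E]
    [NormedSpace ℝ E] [FiniteDimensional ℝ E] {s : Set E} (hs : IsCompact s) :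
    IsCompact (convexHull ℝ s) := by
  classical
  obtain rfl | ⟨x₀, hx₀⟩ := s.eq_empty_or_nonempty
  · simp
  set N := Module.finrank ℝ E + 1
  have himg : convexHull ℝ s = (fun p : (Fin N → ℝ) × (Fin N → E) => ∑ i, p.1 i • p.2 i) ''
      (stdSimplex ℝ (Fin N) ×ˢ Set.univ.pi fun _ => s) := by
    apply Set.Subset.antisymm
    · intro x hx
      obtain ⟨ι, _, z, w, hz, hind, hw, hw1, hx⟩ := eq_pos_convex_span_of_mem_convexHull hx
      have hcard : Fintype.card ι ≤ Fintype.card (Fin N) := by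
        rw [Fintype.card_fin]
        exact hind.card_le_finrank_succ.trans (Nat.succ_le_succ (Submodule.finrank_le _))
      obtain ⟨e⟩ := Function.Embedding.nonempty_of_card_le hcard
      -- pad the weights by `0` and the points by `x₀` outside the image of `e`
      have hw0 : ∀ k, k ∉ Set.range e → Function.extend e w 0 k = 0 := fun k hk =>
        Function.extend_apply' _ _ _ hk
      refine ⟨(Function.extend e w 0, Function.extend e z fun _ => x₀),
        ⟨⟨fun k => ?_, ?_⟩, fun k _ => ?_⟩, ?_⟩
      · by_cases hk : k ∈ Set.range e
        · obtain ⟨i, rfl⟩ := hk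
          simpa [e.injective.extend_apply] using (hw i).le
        · exact (hw0 k hk).ge
      · rw [← hw1]
        refine (Fintype.sum_of_injective e e.injective _ _ hw0 fun i => ?_).symm
        rw [e.injective.extend_apply]
      · by_cases hk : k ∈ Set.range e
        · obtain ⟨i, rfl⟩ := hk
          simpa [e.injective.extend_apply] using hz ⟨i, rfl⟩
        · simpa [Function.extend_apply' _ _ _ hk] using hx₀
      · rw [← hx]
        refine (Fintype.sum_of_injective e e.injective _ _ (fun k hk => ?_) fun i => ?_).symm
        · simp [hw0 k hk]
        · simp [e.injective.extend_apply]
    · rintro _ ⟨⟨w, z⟩, ⟨⟨hw, hw1⟩, hz⟩, rfl⟩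
      exact (convex_convexHull ℝ s).sum_mem (fun i _ => hw i) hw1
        fun i _ => subset_convexHull ℝ s (hz i trivial)
  rw [himg]
  exact ((isCompact_stdSimplex ℝ (Fin N)).prod (isCompact_univ_pi fun _ => hs)).image (by fun_prop)

/-- Over `ℂ` a matrix with nonnegative quadratic form is automatically Hermitian. -/
lemma posSemidef_of_forall_nonneg {n : ℕ} {M : Matrix (Fin n) (Fin n) ℂ}
    (h : ∀ x, 0 ≤ star x ⬝ᵥ (M *ᵥ x)) : M.PosSemidef := by
  rw [← Matrix.isPositive_toEuclideanLin_iff, LinearMap.isPositive_iff_complex]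
  intro x
  have := h x.ofLp
  rw [← star_star (star x.ofLp ⬝ᵥ (M *ᵥ x.ofLp)), star_nonneg_iff, ← star_dotProduct_star,
    star_star] at this
  have e : inner ℂ (M.toEuclideanLin x) x = x.ofLp ⬝ᵥ star (M *ᵥ x.ofLp) := by
    simp [EuclideanSpace.inner_eq_star_dotProduct, Matrix.ofLp_toLpLin, Matrix.toLin'_apply]
  rw [dotProduct_comm] at this
  rw [e]
  rw [Complex.nonneg_iff] at this
  refine ⟨?_, this.1⟩
  apply Complex.ext <;> simp [← this.2]

/-- Applying a positive functional to each block of a positive semidefinite block matrix gives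
a positive semidefinite matrix, since `∑ conj (x i) * x j • Γ_{ij}` is a compression of `Γ`. -/
lemma posSemidef_blockwise {n d : ℕ} {φ : Matrix (Fin d) (Fin d) ℂ →ₗ[ℂ] ℂ}
    (hφ : ∀ X : Matrix (Fin d) (Fin d) ℂ, X.PosSemidef → 0 ≤ φ X)
    {Γ : Matrix (Fin n × Fin d) (Fin n × Fin d) ℂ} (hΓ : Γ.PosSemidef) :
    (Matrix.of fun i j => φ (fun a b => Γ (i, a) (j, b))).PosSemidef := by
  refine posSemidef_of_forall_nonneg fun x => ?_
  let V : Matrix (Fin n × Fin d) (Fin d) ℂ :=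
    Matrix.of fun p a => if p.2 = a then x p.1 else 0
  have h1 : Vᴴ * Γ * V = ∑ i, ∑ j, (star (x i) * x j) •
      (Matrix.of fun a b => Γ (i, a) (j, b)) := by
    ext a b
    simp only [Matrix.mul_apply, Matrix.sum_apply, Fintype.sum_prod_type, V, conjTranspose_apply,
      Matrix.smul_apply, Matrix.of_apply, smul_eq_mul, apply_ite star, star_zero, ite_mul, zero_mul,
      mul_ite, mul_zero, Finset.sum_ite_eq', Finset.mem_univ, if_true, Finset.sum_mul]
    rw [Finset.sum_comm]
    refine Finset.sum_congr rfl fun i _ => Finset.sum_congr rfl fun j _ => by ring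
  have h2 := hφ _ (hΓ.conjTranspose_mul_mul_same V)
  rw [h1] at h2
  simp only [map_sum, map_smul, smul_eq_mul] at h2
  refine h2.trans_eq ?_
  simp only [dotProduct, mulVec, Finset.mul_sum, Pi.star_apply, Matrix.of_apply]
  refine Finset.sum_congr rfl fun i _ => Finset.sum_congr rfl fun j _ => ?_
  rw [mul_assoc, mul_comm (x j)]
  rfl

/-! ### Measure-and-prepare maps and separable matrices -/

/-- Measure-and-prepare (Holevo) form `X ↦ ∑ k, φ k (X) • B k`, with positive functionals `φ k`
and positive semidefinite `B k`. -/
def IsMeasurePrepare {d e : ℕ}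
    (Ψ : Matrix (Fin d) (Fin d) ℂ → Matrix (Fin e) (Fin e) ℂ) : Prop :=
  ∃ (N : ℕ) (φ : Fin N → Matrix (Fin d) (Fin d) ℂ →ₗ[ℂ] ℂ) (B : Fin N → Matrix (Fin e) (Fin e) ℂ),
    (∀ k, ∀ X : Matrix (Fin d) (Fin d) ℂ, X.PosSemidef → 0 ≤ φ k X) ∧ (∀ k, (B k).PosSemidef) ∧
      ∀ X, Ψ X = ∑ k, φ k X • B k

/-- The decomposition is `(I_n ⊗ Ψ)(Γ) = ∑ k, M k ⊗ B k`, where `M k` applies the functional `φ k`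
to each block of `Γ`. -/
lemma IsMeasurePrepare.isSeparableMat_tensorId {n d e : ℕ}
    {Ψ : Matrix (Fin d) (Fin d) ℂ → Matrix (Fin e) (Fin e) ℂ} (h : IsMeasurePrepare Ψ)
    {Γ : Matrix (Fin n × Fin d) (Fin n × Fin d) ℂ} (hΓ : Γ.PosSemidef) :
    IsSeparableMat (tensorId n Ψ Γ) := by
  obtain ⟨N, φ, B, hφ, hB, hΨ⟩ := h
  refine ⟨N, fun k => Matrix.of fun i j => φ k (fun a b => Γ (i, a) (j, b)), B,
    fun k => posSemidef_blockwise (hφ k) hΓ, hB, ?_⟩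
  ext p q
  have := congrFun₂ (hΨ (fun a b => Γ (p.1, a) (q.1, b))) p.2 q.2
  simpa [tensorId, Matrix.sum_apply, kroneckerMap_apply] using this

lemma IsSeparableMat.posSemidef {n d : ℕ} {S : Matrix (Fin n × Fin d) (Fin n × Fin d) ℂ}
    (h : IsSeparableMat S) : S.PosSemidef := by
  obtain ⟨N, A, B, hA, hB, rfl⟩ := h
  exact Matrix.posSemidef_sum _ fun i _ => (hA i).kronecker (hB i)

lemma IsSeparableMat.add {n d : ℕ} {S T : Matrix (Fin n × Fin d) (Fin n × Fin d) ℂ}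
    (hS : IsSeparableMat S) (hT : IsSeparableMat T) : IsSeparableMat (S + T) := by
  obtain ⟨N, A, B, hA, hB, rfl⟩ := hS
  obtain ⟨N', A', B', hA', hB', rfl⟩ := hT
  refine ⟨N + N', Fin.append A A', Fin.append B B', ?_, ?_, ?_⟩
  · intro i; refine Fin.addCases (fun i => ?_) (fun i => ?_) i <;> simp [hA, hA']
  · intro i; refine Fin.addCases (fun i => ?_) (fun i => ?_) i <;> simp [hB, hB']
  · simp [Fin.sum_univ_add]

lemma IsSeparableMat.smul {n d : ℕ} {S : Matrix (Fin n × Fin d) (Fin n × Fin d) ℂ}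
    (hS : IsSeparableMat S) {r : ℝ} (hr : 0 ≤ r) : IsSeparableMat (r • S) := by
  obtain ⟨N, A, B, hA, hB, rfl⟩ := hS
  refine ⟨N, fun i => r • A i, B, fun i => (hA i).smul hr, hB, ?_⟩
  simp [Finset.smul_sum, smul_kronecker]

/-- The Choi matrix without the normalisation `1 / d`. -/
def choiSum {d e : ℕ} (Ψ : Matrix (Fin d) (Fin d) ℂ → Matrix (Fin e) (Fin e) ℂ) :
    Matrix (Fin d × Fin e) (Fin d × Fin e) ℂ :=
  fun p q => Ψ (single p.1 q.1 1) p.2 q.2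

/-- The vector `∑ i, e i ⊗ e i`. -/
def omegaVec (d : ℕ) : Fin d × Fin d → ℂ := fun p => if p.1 = p.2 then 1 else 0

lemma tensorId_omega {d e : ℕ} (Ψ : Matrix (Fin d) (Fin d) ℂ → Matrix (Fin e) (Fin e) ℂ) :
    tensorId d Ψ (vecMulVec (omegaVec d) (star (omegaVec d))) = choiSum Ψ := by
  ext p q
  simp only [tensorId, choiSum]
  congr 2
  ext a b
  simp only [vecMulVec_apply, omegaVec, Pi.star_apply, single_apply]
  by_cases h1 : p.1 = a <;> by_cases h2 : q.1 = b <;> simp [h1, h2]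

/-- A decomposition `∑ k, A k ⊗ B k` of the Choi matrix reads `Φ (E_{ij}) = ∑ k, A k i j • B k`, so
`Φ X = ∑ k, (∑ i j, A k i j * X i j) • B k` by linearity. -/
lemma isMeasurePrepare_of_separable {d e : ℕ}
    (Φ : Matrix (Fin d) (Fin d) ℂ →ₗ[ℂ] Matrix (Fin e) (Fin e) ℂ)
    (h : IsSeparableMat (choiSum Φ)) : IsMeasurePrepare Φ := by
  obtain ⟨N, A, B, hA, hB, hC⟩ := h
  refine ⟨N, fun k => ∑ i, ∑ j, A k i j • Matrix.entryLinearMap ℂ ℂ i j, B, ?_, hB, ?_⟩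
  · intro k X hX
    obtain ⟨m, v, rfl⟩ := Matrix.posSemidef_iff_eq_sum_vecMulVec.mp hX
    rw [map_sum]
    refine Finset.sum_nonneg fun l _ => ?_
    -- on `|v⟩⟨v|` the functional is the quadratic form of `A k` at the conjugate of `v`
    refine ((hA k).dotProduct_mulVec_nonneg (star (v l))).trans_eq ?_
    simp only [dotProduct, mulVec, Finset.mul_sum, LinearMap.sum_apply, LinearMap.smul_apply,
      Matrix.entryLinearMap_apply, vecMulVec_apply, Pi.star_apply, star_star, smul_eq_mul]
    refine Finset.sum_congr rfl fun i _ => Finset.sum_congr rfl fun j _ => by ring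
  · intro X
    have hE : ∀ i j, Φ (single i j 1) = ∑ k, A k i j • B k := by
      intro i j
      ext a b
      simpa [choiSum, Matrix.sum_apply, kroneckerMap_apply] using congrFun₂ hC (i, a) (j, b)
    have hX : X = ∑ i, ∑ j, X i j • single i j (1 : ℂ) := by
      conv_lhs => rw [matrix_eq_sum_single X]
      simp [smul_single]
    conv_lhs => rw [hX]
    simp only [map_sum, map_smul, hE, LinearMap.sum_apply, LinearMap.smul_apply,
      Matrix.entryLinearMap_apply, Finset.sum_smul, Finset.smul_sum, smul_smul, smul_eq_mul]
    rw [Finset.sum_comm_cycle]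
    exact Finset.sum_congr rfl fun k _ => Finset.sum_congr rfl fun i _ =>
      Finset.sum_congr rfl fun j _ => by rw [mul_comm]

/-! ### Entanglement witnesses -/

section Separation

open scoped Matrix.Norms.Elementwise

/-- The product states `|v⟩⟨v| ⊗ |w⟩⟨w|` with `v`, `w` unit vectors. -/
def productStates (n d : ℕ) : Set (Matrix (Fin n × Fin d) (Fin n × Fin d) ℂ) :=
  (fun p : EuclideanSpace ℂ (Fin n) × EuclideanSpace ℂ (Fin d) =>
    rankOne p.1.ofLp ⊗ₖ rankOne p.2.ofLp) '' (Metric.sphere 0 1 ×ˢ Metric.sphere 0 1)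

lemma isCompact_productStates (n d : ℕ) : IsCompact (productStates n d) := by
  refine ((isCompact_sphere _ _).prod (isCompact_sphere _ _)).image ?_
  refine continuous_matrix fun p q => ?_
  simp only [rankOne, kroneckerMap_apply, vecMulVec_apply, Pi.star_apply]
  fun_prop

lemma isSeparableMat_of_mem_convexHull {n d : ℕ}
    {S : Matrix (Fin n × Fin d) (Fin n × Fin d) ℂ} (hS : S ∈ convexHull ℝ (productStates n d)) :
    IsSeparableMat S := by
  refine convexHull_min (t := {S | IsSeparableMat S}) ?_ ?_ hS
  · rintro _ ⟨p, -, rfl⟩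
    exact ⟨1, fun _ => rankOne p.1.ofLp, fun _ => rankOne p.2.ofLp,
      fun _ => posSemidef_vecMulVec_self_star _, fun _ => posSemidef_vecMulVec_self_star _,
      by simp⟩
  · intro S hS T hT a b ha hb _
    exact (IsSeparableMat.smul hS ha).add (IsSeparableMat.smul hT hb)

lemma exists_unit_rankOne {n : ℕ} (v : Fin n → ℂ) (hv : v ≠ 0) :
    ∃ (c : ℝ) (u : EuclideanSpace ℂ (Fin n)), 0 ≤ c ∧ u ∈ Metric.sphere 0 1 ∧
      rankOne v = c • rankOne u.ofLp := by
  obtain ⟨w, rfl⟩ : ∃ w : EuclideanSpace ℂ (Fin n), v = w.ofLp := ⟨WithLp.toLp 2 v, rfl⟩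
  have hw : ‖w‖ ≠ 0 := by simpa using hv
  refine ⟨‖w‖ ^ 2, (‖w‖⁻¹ : ℝ) • w, by positivity, ?_, ?_⟩
  · simp [norm_smul, hw]
  · ext i j
    have hw' : (‖w‖ : ℂ) ≠ 0 := by exact_mod_cast hw
    simp only [rankOne, vecMulVec_apply, Pi.star_apply, Matrix.smul_apply, PiLp.smul_apply,
      Complex.real_smul, star_mul, RCLike.star_def, Complex.conj_ofReal]
    push_cast
    field_simp

lemma trace_rankOne {n : ℕ} {u : EuclideanSpace ℂ (Fin n)} (hu : u ∈ Metric.sphere 0 1) :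
    (rankOne u.ofLp).trace = 1 := by
  have h1 : ‖u‖ = 1 := by simpa using hu
  have h2 : inner ℂ u u = (1 : ℂ) := by rw [inner_self_eq_norm_sq_to_K, h1]; simp
  rw [rankOne, trace_vecMulVec]
  rwa [EuclideanSpace.inner_eq_star_dotProduct] at h2

/-- Entanglement witness: a positive semidefinite matrix that is not separable is detected by a
linear functional that is nonnegative on products of positive semidefinite matrices. -/
lemma exists_witness {n d : ℕ} {C : Matrix (Fin n × Fin d) (Fin n × Fin d) ℂ}
    (hC : C.PosSemidef) (hsep : ¬ IsSeparableMat C) :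
    ∃ g : Matrix (Fin n × Fin d) (Fin n × Fin d) ℂ →ₗ[ℂ] ℂ,
      (∀ (A : Matrix (Fin n) (Fin n) ℂ) (B : Matrix (Fin d) (Fin d) ℂ),
        A.PosSemidef → B.PosSemidef → 0 ≤ g (A ⊗ₖ B)) ∧ ¬ 0 ≤ g C := by
  obtain ⟨ht0, htr⟩ := Complex.nonneg_iff.mp hC.trace_nonneg
  have ht : 0 < C.trace.re := by
    refine lt_of_le_of_ne ht0 fun h => hsep ?_
    have : C = 0 := hC.trace_eq_zero_iff.mp (Complex.ext h.symm htr.symm)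
    exact ⟨0, Fin.elim0, Fin.elim0, fun i => i.elim0, fun i => i.elim0, by simp [this]⟩
  set t := C.trace.re
  -- normalised to trace one, `C` lies outside the compact convex hull of the product states
  have hx : t⁻¹ • C ∉ convexHull ℝ (productStates n d) := fun h => hsep <| by
    simpa [smul_smul, ht.ne'] using (isSeparableMat_of_mem_convexHull h).smul ht.le
  obtain ⟨f, u, hfx, hfK⟩ := geometric_hahn_banach_point_closed (convex_convexHull ℝ _)
    (isCompact_convexHull_of_finiteDimensional (isCompact_productStates n d)).isClosed hx
  -- subtracting `u * trace` moves the separating hyperplane to the origin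
  let h : Module.Dual ℝ (Matrix (Fin n × Fin d) (Fin n × Fin d) ℂ) :=
    f.toLinearMap - u • (Complex.reLm ∘ₗ Matrix.traceLinearMap (Fin n × Fin d) ℝ ℂ)
  have h_apply : ∀ S, h S = f S - u * S.trace.re := fun S => rfl
  -- symmetrising makes the complex-linear extension real on Hermitian matrices
  let h₂ : Module.Dual ℝ (Matrix (Fin n × Fin d) (Fin n × Fin d) ℂ) :=
    h + h ∘ₗ (Matrix.conjTransposeLinearEquiv (Fin n × Fin d) (Fin n × Fin d) ℝ ℂ).toLinearMap
  have h₂_apply : ∀ S, h₂ S = h S + h Sᴴ := fun S => rfl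
  let g : Matrix (Fin n × Fin d) (Fin n × Fin d) ℂ →ₗ[ℂ] ℂ := h₂.extendRCLike
  have hg : ∀ S : Matrix (Fin n × Fin d) (Fin n × Fin d) ℂ, S.IsHermitian →
      g S = ((2 * h S : ℝ) : ℂ) := by
    intro S hS
    have e1 : h₂ S = 2 * h S := by rw [h₂_apply, hS.eq]; ring
    have e2 : h₂ (Complex.I • S) = 0 := by
      rw [h₂_apply, conjTranspose_smul, hS.eq]
      simp
    change ((h₂ S : ℝ) : ℂ) - Complex.I * ((h₂ (Complex.I • S) : ℝ) : ℂ) = _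
    rw [e1, e2]; simp
  have hpure : ∀ (v : Fin n → ℂ) (w : Fin d → ℂ), 0 ≤ g (rankOne v ⊗ₖ rankOne w) := by
    intro v w
    by_cases hv : v = 0
    · simp [hv, rankOne]
    by_cases hw : w = 0
    · simp [hw, rankOne]
    obtain ⟨c, a, hc, ha, hva⟩ := exists_unit_rankOne v hv
    obtain ⟨c', b, hc', hb, hwb⟩ := exists_unit_rankOne w hw
    have hvw : (rankOne v ⊗ₖ rankOne w).PosSemidef :=
      (posSemidef_vecMulVec_self_star v).kronecker (posSemidef_vecMulVec_self_star w)
    rw [hg _ hvw.isHermitian, Complex.zero_le_real]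
    have hab : 0 ≤ h (rankOne a.ofLp ⊗ₖ rankOne b.ofLp) := by
      have := hfK _ (subset_convexHull ℝ _ ⟨(a, b), ⟨ha, hb⟩, rfl⟩)
      rw [h_apply, trace_kronecker, trace_rankOne ha, trace_rankOne hb]
      simpa using this.le
    rw [hva, hwb, smul_kronecker, kronecker_smul, map_smul, map_smul]
    simp only [smul_eq_mul]
    positivity
  refine ⟨g, fun A B hA hB => ?_, ?_⟩
  · obtain ⟨k, v, rfl⟩ := Matrix.posSemidef_iff_eq_sum_vecMulVec.mp hA
    obtain ⟨l, w, rfl⟩ := Matrix.posSemidef_iff_eq_sum_vecMulVec.mp hB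
    have : (∑ i, vecMulVec (v i) (star (v i))) ⊗ₖ (∑ j, vecMulVec (w j) (star (w j))) =
        ∑ i, ∑ j, rankOne (v i) ⊗ₖ rankOne (w j) := by
      ext p q
      simp [Matrix.sum_apply, kroneckerMap_apply, rankOne, Finset.sum_mul_sum]
    rw [this]
    simp only [map_sum]
    exact Finset.sum_nonneg fun i _ => Finset.sum_nonneg fun j _ => hpure _ _
  · rw [hg _ hC.isHermitian, Complex.zero_le_real, h_apply]
    have : f (t⁻¹ • C) = t⁻¹ * f C := by simp
    rw [this, inv_mul_lt_iff₀ ht] at hfx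
    change ¬ 0 ≤ 2 * (f C - u * t)
    linarith

end Separation

/-! ### Separability of the Choi matrix -/

/-- If `Φ ∘ Υ` is completely positive for all positive `Υ`, then the Choi matrix of `Φ` is
separable: a witness `g` against it gives the positive map `Υ(X)_{ij} = g (E_{ij} ⊗ X)`, for which
`⟨Ω| (I ⊗ Φ ∘ Υ)(|Ω⟩⟨Ω|) |Ω⟩ = g (Choi Φ)` is not nonnegative. -/
lemma isSeparableMat_choiSum {d : ℕ} (hd : 1 ≤ d)
    (Φ : Matrix (Fin d) (Fin d) ℂ →ₗ[ℂ] Matrix (Fin d) (Fin d) ℂ)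
    (H : ∀ Υ : Matrix (Fin d) (Fin d) ℂ →ₗ[ℂ] Matrix (Fin d) (Fin d) ℂ,
      (∀ X : Matrix (Fin d) (Fin d) ℂ, X.PosSemidef → (Υ X).PosSemidef) →
      CompletelyPositive (fun ρ : Matrix (Fin d) (Fin d) ℂ => Φ (Υ ρ))) :
    IsSeparableMat (choiSum Φ) := by
  have hchoi : ∀ Υ : Matrix (Fin d) (Fin d) ℂ →ₗ[ℂ] Matrix (Fin d) (Fin d) ℂ,
      (∀ X : Matrix (Fin d) (Fin d) ℂ, X.PosSemidef → (Υ X).PosSemidef) →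
      (choiSum fun ρ => Φ (Υ ρ)).PosSemidef := fun Υ hΥ => by
    rw [← tensorId_omega]
    exact H Υ hΥ d hd _ (posSemidef_vecMulVec_self_star _)
  by_contra hsep
  obtain ⟨g, hg, hgC⟩ := exists_witness (hchoi LinearMap.id fun X hX => hX) hsep
  let Υ : Matrix (Fin d) (Fin d) ℂ →ₗ[ℂ] Matrix (Fin d) (Fin d) ℂ :=
    { toFun := fun X => Matrix.of fun i j => g (single i j 1 ⊗ₖ X)
      map_add' := fun X Y => by ext i j; simp [kronecker_add]
      map_smul' := fun c X => by ext i j; simp [kronecker_smul] }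
  have hΥ : ∀ X : Matrix (Fin d) (Fin d) ℂ, X.PosSemidef → (Υ X).PosSemidef := by
    intro X hX
    refine posSemidef_of_forall_nonneg fun y => ?_
    refine (hg _ X (posSemidef_vecMulVec_star_self y) hX).trans_eq ?_
    have : vecMulVec (star y) y ⊗ₖ X =
        ∑ i, ∑ j, (star (y i) * y j) • (single i j (1 : ℂ) ⊗ₖ X) := by
      rw [matrix_eq_sum_single (vecMulVec (star y) y)]
      ext p q
      simp [Matrix.sum_apply, kroneckerMap_apply, vecMulVec_apply, single_apply, ite_and]
    rw [this]
    simp only [map_sum, map_smul, smul_eq_mul, dotProduct, mulVec, Finset.mul_sum, Pi.star_apply]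
    refine Finset.sum_congr rfl fun i _ => Finset.sum_congr rfl fun j _ => ?_
    rw [mul_assoc, mul_comm (y j)]
    rfl
  apply hgC
  refine ((hchoi Υ hΥ).dotProduct_mulVec_nonneg (omegaVec d)).trans_eq ?_
  have hC : choiSum Φ = ∑ i, ∑ j, ∑ a, ∑ b, Φ (single i j 1) a b •
      (single i j (1 : ℂ) ⊗ₖ single a b (1 : ℂ)) := by
    ext p q
    simp [choiSum, Matrix.sum_apply, kroneckerMap_apply, single_apply, ite_and]
  have hΦΥ : ∀ a b, Φ (Υ (single a b 1)) = ∑ i, ∑ j,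
      g (single i j 1 ⊗ₖ single a b 1) • Φ (single i j 1) := by
    intro a b
    conv_lhs => rw [matrix_eq_sum_single (Υ (single a b 1))]
    simp only [map_sum]
    refine Finset.sum_congr rfl fun i _ => Finset.sum_congr rfl fun j _ => ?_
    rw [← map_smul, smul_single, smul_eq_mul, mul_one]
    rfl
  change _ = g (choiSum Φ)
  rw [hC]
  simp only [map_sum, map_smul, smul_eq_mul]
  have hL : star (omegaVec d) ⬝ᵥ ((choiSum fun ρ => Φ (Υ ρ)) *ᵥ omegaVec d) =
      ∑ a, ∑ b, Φ (Υ (single a b 1)) a b := by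
    simp [dotProduct, mulVec, Fintype.sum_prod_type, omegaVec, choiSum]
  rw [hL]
  simp only [hΦΥ, Matrix.sum_apply, Matrix.smul_apply, smul_eq_mul]
  -- both sides sum over all pairs of matrix units, in opposite orders
  have hswap := Finset.sum_comm (s := (Finset.univ : Finset (Fin d × Fin d)))
    (t := (Finset.univ : Finset (Fin d × Fin d)))
    (f := fun p q => g (single q.1 q.2 1 ⊗ₖ single p.1 p.2 1) * Φ (single q.1 q.2 1) p.1 p.2)
  simp only [Fintype.sum_prod_type] at hswap
  rw [hswap]
  simp only [mul_comm]

/-- (B) ⇔ (F) of Theorem 2: `Φ` is entanglement breaking iff `Φ ∘ Υ` is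
completely positive for every positivity-preserving linear map `Υ`. -/
theorem entanglement_breaking_iff_comp_right_positivity_preserving
    {d : ℕ} (Φ : Matrix (Fin d) (Fin d) ℂ →ₗ[ℂ] Matrix (Fin d) (Fin d) ℂ) :
    EntBreaking (fun ρ => Φ ρ) ↔
      ∀ m : ℕ, 1 ≤ m →
        ∀ Υ : Matrix (Fin m) (Fin m) ℂ →ₗ[ℂ] Matrix (Fin d) (Fin d) ℂ,
          (∀ X : Matrix (Fin m) (Fin m) ℂ, X.PosSemidef → (Υ X).PosSemidef) →
          CompletelyPositive (fun ρ : Matrix (Fin m) (Fin m) ℂ => Φ (Υ ρ)) := by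
  -- both notions require `1 ≤ n`, so `n = d` is unavailable for `d = 0`, where `C` is empty
  have hzero : ¬ 1 ≤ d → IsSeparableMat (choiSum Φ) := fun hd => by
    obtain rfl : d = 0 := by omega
    exact ⟨0, Fin.elim0, Fin.elim0, fun i => i.elim0, fun i => i.elim0, Subsingleton.elim _ _⟩
  constructor
  · intro h m _ Υ hΥ n _ Γ hΓ
    have hsep : IsSeparableMat (choiSum Φ) := by
      by_cases hd : 1 ≤ d
      · rw [← tensorId_omega]
        exact h d hd _ (posSemidef_vecMulVec_self_star _)
      · exact hzero hd
    obtain ⟨N, φ, B, hφ, hB, hΦ⟩ := isMeasurePrepare_of_separable Φ hsep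
    have : IsMeasurePrepare (fun ρ : Matrix (Fin m) (Fin m) ℂ => Φ (Υ ρ)) :=
      ⟨N, fun k => φ k ∘ₗ Υ, B, fun k X hX => hφ k _ (hΥ X hX), hB, fun X => hΦ (Υ X)⟩
    exact (this.isSeparableMat_tensorId hΓ).posSemidef
  · intro h n _ Γ hΓ
    have hsep : IsSeparableMat (choiSum Φ) := by
      by_cases hd : 1 ≤ d
      · exact isSeparableMat_choiSum hd Φ (h d hd)
      · exact hzero hd
    exact (isMeasurePrepare_of_separable Φ hsep).isSeparableMat_tensorId hΓ
end
end

section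
/- If a linear map Φ on d×d complex matrices is an EBT map and is an extreme point of the set of completely positive trace-preserving maps, then Φ is an extreme CQ map, i.e. there exist an orthonormal basis {e_k} of ℂ^d and unit vectors ψ_k such that Φ(ρ) = Σ_{k=1}^d |ψ_k⟩⟨ψ_k| · ⟨e_k, ρ e_k⟩ for all ρ. (Theorem 3, part C.) -/
/-!
Applying the entanglement-breaking hypothesis to the maximally entangled state writes `Φ` as a
measurement followed by a preparation, `Φ ρ = ∑ i, ⟨v i, ρ v i⟩ |w i⟩⟨w i|` with unit vectors `w i`
and `∑ i, |v i⟩⟨v i| = 1`. Merging the effects with a common output state and diagonalizing them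
makes `v i` and `v j` orthogonal whenever `w i` and `w j` span the same line
(`exists_orthogonal_representation`). The Kraus operators of `Φ` are then `|w i⟩⟨v i|`.

Extremality among the CPT maps gives Choi's bound (`card_le_of_extreme`): at most `d` of the Kraus
operators can be linearly independent. Indeed, a Hermitian relation `∑ M_ab L_aᴴ L_b = 0` makes
`Φ ± ε ∑ M_ab L_b ρ L_aᴴ` CPT for small `ε`, hence equal to `Φ`, so independence of the `L_a`
forces `M = 0`; the products `L_aᴴ L_b` are thus independent in a space of dimension `d ^ 2`.

The vectors `v i` span `ℂ^d`; choose a basis among them. If some `v j` were left over, adjoining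
its Kraus operator to those of the basis would give `d + 1` independent Kraus operators
(`linearIndependent_option_kraus`), contradicting the bound. So there are exactly `d` vectors `v i`,
and `d` vectors in `ℂ^d` with `∑ i, |v i⟩⟨v i| = 1` form an orthonormal basis.
-/


open Matrix Kronecker BigOperators ComplexOrder

noncomputable section

/-! ### Complete positivity of Kraus sums -/

/-- The completely positive building block `ρ ↦ L ρ Lᴴ`. -/
def krausTerm {d : ℕ} (L ρ : Matrix (Fin d) (Fin d) ℂ) : Matrix (Fin d) (Fin d) ℂ :=
  L * ρ * Lᴴ

lemma completelyPositive_krausTerm {d : ℕ} (L : Matrix (Fin d) (Fin d) ℂ) :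
    CompletelyPositive (krausTerm L) := by
  intro n _ Γ hΓ
  have h : tensorId n (krausTerm L) Γ
      = ((1 : Matrix (Fin n) (Fin n) ℂ) ⊗ₖ L) * Γ * ((1 : Matrix (Fin n) (Fin n) ℂ) ⊗ₖ L)ᴴ := by
    ext ⟨i, a⟩ ⟨j, b⟩
    simp [tensorId, krausTerm, Matrix.mul_apply, Fintype.sum_prod_type, Matrix.one_apply,
      ite_mul, apply_ite]
    rfl
  rw [h]
  exact hΓ.mul_mul_conjTranspose_same _

lemma completelyPositive_add {d : ℕ} {Φ Ψ : Matrix (Fin d) (Fin d) ℂ → Matrix (Fin d) (Fin d) ℂ}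
    (hΦ : CompletelyPositive Φ) (hΨ : CompletelyPositive Ψ) :
    CompletelyPositive (fun ρ => Φ ρ + Ψ ρ) := by
  intro n hn Γ hΓ
  exact (hΦ n hn Γ hΓ).add (hΨ n hn Γ hΓ)

lemma completelyPositive_sum_krausTerm {d : ℕ} {κ : Type*} (s : Finset κ)
    (L : κ → Matrix (Fin d) (Fin d) ℂ) :
    CompletelyPositive (fun ρ => ∑ k ∈ s, krausTerm (L k) ρ) := by
  intro n hn Γ hΓ
  have h : tensorId n (fun ρ => ∑ k ∈ s, krausTerm (L k) ρ) Γ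
      = ∑ k ∈ s, tensorId n (krausTerm (L k)) Γ := by
    ext p q
    simp [tensorId, Matrix.sum_apply]
  rw [h]
  exact Matrix.posSemidef_sum _ fun k _ => completelyPositive_krausTerm (L k) n hn Γ hΓ

/-- The map `ρ ↦ ∑ M_ab L_b ρ L_aᴴ` attached to a coefficient matrix `M`; for `M = 1` it is the
map with Kraus operators `L`. -/
def krausForm {d : ℕ} {κ : Type*} [Fintype κ] (L : κ → Matrix (Fin d) (Fin d) ℂ)
    (M : Matrix κ κ ℂ) (ρ : Matrix (Fin d) (Fin d) ℂ) : Matrix (Fin d) (Fin d) ℂ :=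
  ∑ a, ∑ b, M a b • (L b * ρ * (L a)ᴴ)

section
variable {d : ℕ} {κ : Type*} [Fintype κ] (L : κ → Matrix (Fin d) (Fin d) ℂ)

lemma krausForm_one [DecidableEq κ] (ρ : Matrix (Fin d) (Fin d) ℂ) :
    krausForm L 1 ρ = ∑ a, krausTerm (L a) ρ := by
  simp [krausForm, krausTerm, Matrix.one_apply, ite_smul]

lemma krausForm_add_smul (M N : Matrix κ κ ℂ) (c : ℂ) (ρ : Matrix (Fin d) (Fin d) ℂ) :
    krausForm L (M + c • N) ρ = krausForm L M ρ + c • krausForm L N ρ := by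
  simp [krausForm, add_smul, Finset.sum_add_distrib, Finset.smul_sum, mul_smul]

/-- A factorization `M = Bᴴ B` turns `krausForm L M` into a sum of Kraus terms. -/
lemma completelyPositive_krausForm {M : Matrix κ κ ℂ} (hM : M.PosSemidef) :
    CompletelyPositive (krausForm L M) := by
  classical
  obtain ⟨B, rfl⟩ : ∃ B : Matrix κ κ ℂ, M = Bᴴ * B := by
    open scoped MatrixOrder in
    exact CStarAlgebra.nonneg_iff_eq_star_mul_self.mp hM.nonneg
  have h : krausForm L (Bᴴ * B)
      = fun ρ => ∑ k, krausTerm (∑ b, B k b • L b) ρ := by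
    funext ρ
    simp only [krausForm, krausTerm, Matrix.mul_apply, Matrix.conjTranspose_apply,
      Matrix.conjTranspose_sum, Matrix.conjTranspose_smul, Finset.sum_mul, Finset.mul_sum,
      Finset.sum_smul, smul_mul_assoc, mul_smul_comm, Finset.smul_sum, smul_smul]
    refine (Finset.sum_congr rfl fun a _ => Finset.sum_comm).trans (Finset.sum_comm.trans ?_)
    refine Finset.sum_congr rfl fun k _ => Finset.sum_congr rfl fun a _ => ?_
    rfl
  rw [h]
  exact completelyPositive_sum_krausTerm _ _

/-- The matrix `∑ M_ab L_aᴴ L_b`, as a linear map in `M`. It determines the trace of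
`krausForm L M ρ` (`trace_krausForm`). -/
def krausGram : Matrix κ κ ℂ →ₗ[ℂ] Matrix (Fin d) (Fin d) ℂ where
  toFun M := ∑ a, ∑ b, M a b • ((L a)ᴴ * L b)
  map_add' M N := by simp [add_smul, Finset.sum_add_distrib]
  map_smul' c M := by simp [Finset.smul_sum, mul_smul]

lemma krausGram_apply (M : Matrix κ κ ℂ) :
    krausGram L M = ∑ a, ∑ b, M a b • ((L a)ᴴ * L b) := rfl

lemma trace_krausForm (M : Matrix κ κ ℂ) (ρ : Matrix (Fin d) (Fin d) ℂ) :
    (krausForm L M ρ).trace = (krausGram L M * ρ).trace := by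
  simp only [krausForm, krausGram_apply, Finset.sum_mul, Matrix.trace_sum, Matrix.trace_smul,
    smul_mul_assoc]
  refine Finset.sum_congr rfl fun a _ => Finset.sum_congr rfl fun b _ => ?_
  rw [Matrix.trace_mul_comm, Matrix.mul_assoc]

lemma krausGram_conjTranspose (M : Matrix κ κ ℂ) :
    krausGram L Mᴴ = (krausGram L M)ᴴ := by
  simp only [krausGram_apply, Matrix.conjTranspose_sum, Matrix.conjTranspose_smul,
    Matrix.conjTranspose_mul, Matrix.conjTranspose_conjTranspose, Matrix.conjTranspose_apply]
  exact Finset.sum_comm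

lemma eq_zero_of_krausForm_eq_zero (hL : LinearIndependent ℂ L) {M : Matrix κ κ ℂ}
    (h : ∀ ρ, krausForm L M ρ = 0) : M = 0 := by
  have hlin := Fintype.linearIndependent_iff.mp hL
  -- Evaluating at the matrix units gives `∑ M_ab • L_b ⊗ conj L_a = 0` entrywise.
  have h1 : ∀ x y r s, ∑ a, ∑ b, M a b * (L b x y * star (L a r s)) = 0 := by
    intro x y r s
    have := congrFun (congrFun (h (Matrix.single y s 1)) x) r
    simpa [krausForm, Matrix.sum_apply, Matrix.mul_apply, Matrix.single_apply, ite_and]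
      using this
  have h2 : ∀ r s b, ∑ a, M a b * star (L a r s) = 0 := by
    intro r s
    apply hlin
    ext x y
    have := h1 x y r s
    rw [Finset.sum_comm] at this
    simp only [Matrix.sum_apply, Matrix.smul_apply, smul_eq_mul, Finset.sum_mul, Matrix.zero_apply]
    rw [← this]
    refine Finset.sum_congr rfl fun b _ => Finset.sum_congr rfl fun a _ => ?_
    ring
  have h3 : ∀ b a, star (M a b) = 0 := by
    intro b
    apply hlin
    ext x y
    have := congrArg star (h2 x y b)
    simpa [Matrix.sum_apply] using this
  ext a b
  simpa using h3 b a

end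

/-! ### Choi's bound at an extreme point -/

/-- A Hermitian matrix can be scaled into the interval `[-1, 1]`. -/
lemma exists_pos_one_add_smul_posSemidef {κ : Type*} [Fintype κ] [DecidableEq κ]
    {H : Matrix κ κ ℂ} (hH : H.IsHermitian) :
    ∃ ε : ℝ, 0 < ε ∧ (1 + (ε : ℂ) • H).PosSemidef ∧ (1 + (-ε : ℂ) • H).PosSemidef := by
  open scoped MatrixOrder Matrix.Norms.L2Operator in
  have hs : IsSelfAdjoint H := hH
  have h1 := hs.le_algebraMap_norm_self
  have h2 := hs.neg_algebraMap_norm_le_self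
  set r : ℝ := ‖H‖
  have hr : 0 ≤ r := norm_nonneg _
  rw [Matrix.le_iff] at h1 h2
  have hp : (0 : ℝ) < (r + 1)⁻¹ := by positivity
  have hc : (0 : ℂ) ≤ (((r + 1)⁻¹ : ℝ) : ℂ) := by exact_mod_cast hp.le
  have hne : ((r : ℂ) + 1) ≠ 0 := by
    exact_mod_cast (by positivity : (r + 1) ≠ 0)
  have hone : (1 : Matrix κ κ ℂ).PosSemidef := Matrix.PosSemidef.one
  refine ⟨(r + 1)⁻¹, hp, ?_, ?_⟩
  · have e : 1 + (((r + 1)⁻¹ : ℝ) : ℂ) • H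
        = (((r + 1)⁻¹ : ℝ) : ℂ) • (H - -(algebraMap ℝ (Matrix κ κ ℂ)) r + 1) := by
      ext a b
      by_cases hab : a = b <;> simp [Matrix.algebraMap_matrix_apply, hab]
      all_goals
        field_simp
        try ring
    rw [e]
    exact (h2.add hone).smul hc
  · have e : 1 + -(((r + 1)⁻¹ : ℝ) : ℂ) • H
        = (((r + 1)⁻¹ : ℝ) : ℂ) • ((algebraMap ℝ (Matrix κ κ ℂ)) r - H + 1) := by
      ext a b
      by_cases hab : a = b <;> simp [Matrix.algebraMap_matrix_apply, hab]
      all_goals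
        field_simp
        try ring
    rw [e]
    exact (h1.add hone).smul hc

section
variable {d : ℕ} {κ : Type*} [Fintype κ] {L : κ → Matrix (Fin d) (Fin d) ℂ}
  {Φ Θ : Matrix (Fin d) (Fin d) ℂ → Matrix (Fin d) (Fin d) ℂ}

/-- If `krausGram L H = 0` for a Hermitian `H`, then `Φ` is the midpoint of the two CPT maps
`Φ ± ε • krausForm L H`. -/
lemma eq_zero_of_krausGram_eq_zero_of_isHermitian (hext : IsExtremePointOf IsCPTP Φ)
    (hΘ : CompletelyPositive Θ) (hΦ : ∀ ρ, Φ ρ = Θ ρ + ∑ a, krausTerm (L a) ρ)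
    (hL : LinearIndependent ℂ L) {H : Matrix κ κ ℂ} (hH : H.IsHermitian)
    (h0 : krausGram L H = 0) : H = 0 := by
  classical
  obtain ⟨ε, hε, hpos, hneg⟩ := exists_pos_one_add_smul_posSemidef hH
  obtain ⟨⟨hlin, -, htr⟩, hex⟩ := hext
  have key : ∀ c : ℂ, (1 + c • H).PosSemidef → IsCPTP (fun ρ => Φ ρ + c • krausForm L H ρ) := by
    intro c hc
    refine ⟨⟨?_, ?_⟩, ?_, ?_⟩
    · intro x y
      have : krausForm L H (x + y) = krausForm L H x + krausForm L H y := by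
        simp [krausForm, mul_add, add_mul, Finset.sum_add_distrib]
      simp only [hlin.map_add, this, smul_add]
      abel
    · intro t x
      have : krausForm L H (t • x) = t • krausForm L H x := by
        simp [krausForm, Finset.smul_sum, smul_comm t]
      simp only [hlin.map_smul, this, smul_add, smul_comm t]
    · have : (fun ρ => Φ ρ + c • krausForm L H ρ)
          = fun ρ => Θ ρ + krausForm L (1 + c • H) ρ := by
        funext ρ
        rw [krausForm_add_smul, krausForm_one, hΦ, add_assoc]
      rw [this]
      exact completelyPositive_add hΘ (completelyPositive_krausForm L hc)
    · intro ρ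
      rw [Matrix.trace_add, Matrix.trace_smul, trace_krausForm, h0, htr]
      simp
  have := (hex _ _ (key _ hpos) (key _ hneg) (1 / 2) (by norm_num) (by norm_num) ?_).1
  · refine eq_zero_of_krausForm_eq_zero L hL fun ρ => ?_
    have h1 := congrFun this ρ
    simp only [add_eq_left, smul_eq_zero] at h1
    exact h1.resolve_left (by exact_mod_cast hε.ne')
  · funext ρ
    ext x y
    simp
    ring

/-- Choi's bound: at an extreme point, linear independence of the Kraus operators `L_a` forces
linear independence of the products `L_aᴴ L_b`, so there are at most `d` of the `L_a`. -/
lemma card_le_of_extreme (hext : IsExtremePointOf IsCPTP Φ)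
    (hΘ : CompletelyPositive Θ) (hΦ : ∀ ρ, Φ ρ = Θ ρ + ∑ a, krausTerm (L a) ρ)
    (hL : LinearIndependent ℂ L) : Fintype.card κ ≤ d := by
  have hinj : Function.Injective (krausGram L) := by
    rw [← LinearMap.ker_eq_bot, LinearMap.ker_eq_bot']
    intro M hM
    have hM' : krausGram L Mᴴ = 0 := by rw [krausGram_conjTranspose, hM, Matrix.conjTranspose_zero]
    -- The Hermitian and anti-Hermitian parts of `M` vanish separately.
    have h1 : M + Mᴴ = 0 := by
      refine eq_zero_of_krausGram_eq_zero_of_isHermitian hext hΘ hΦ hL ?_ ?_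
      · simp [Matrix.IsHermitian, add_comm]
      · rw [map_add, hM, hM', add_zero]
    have h2 : Complex.I • (M - Mᴴ) = 0 := by
      refine eq_zero_of_krausGram_eq_zero_of_isHermitian hext hΘ hΦ hL ?_ ?_
      · simp [Matrix.IsHermitian, Matrix.conjTranspose_smul, smul_sub]
        abel
      · rw [map_smul, map_sub, hM, hM', sub_zero, smul_zero]
    have h3 : M - Mᴴ = 0 := (smul_eq_zero.mp h2).resolve_left Complex.I_ne_zero
    have h4 : (2 : ℂ) • M = 0 := by
      rw [two_smul]
      calc M + M = (M + Mᴴ) + (M - Mᴴ) := by abel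
        _ = 0 := by rw [h1, h3, add_zero]
    exact (smul_eq_zero.mp h4).resolve_left two_ne_zero
  have := LinearMap.finrank_le_finrank_of_injective hinj
  simp only [Module.finrank_matrix, Module.finrank_self, mul_one, Fintype.card_fin] at this
  exact Nat.mul_self_le_mul_self_iff.mp this

end
/-! ### The measure-and-prepare form -/

/-- Spectral decomposition of a positive semidefinite matrix, with the square roots of the
eigenvalues absorbed into the eigenvectors. -/
lemma exists_orthogonal_sum_rankOne {d : ℕ} {F : Matrix (Fin d) (Fin d) ℂ} (hF : F.PosSemidef) :
    ∃ v : Fin d → Fin d → ℂ, F = ∑ k, rankOne (v k) ∧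
      ∀ k l, k ≠ l → star (v k) ⬝ᵥ v l = 0 := by
  set U := hF.isHermitian.eigenvectorUnitary
  set s : Fin d → ℝ := fun k => Real.sqrt (hF.isHermitian.eigenvalues k)
  have hs : ∀ k, (s k : ℂ) * s k = hF.isHermitian.eigenvalues k := fun k => by
    rw [← Complex.ofReal_mul, Real.mul_self_sqrt (hF.eigenvalues_nonneg k)]
  refine ⟨fun k i => s k * (U : Matrix (Fin d) (Fin d) ℂ) i k, ?_, ?_⟩
  · conv_lhs => rw [hF.isHermitian.spectral_theorem]
    ext i j
    rw [Unitary.conjStarAlgAut_apply, Matrix.mul_apply]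
    simp only [Matrix.mul_diagonal, Matrix.sum_apply, rankOne, Matrix.vecMulVec_apply,
      Pi.star_apply, star_mul', Matrix.star_apply]
    refine Finset.sum_congr rfl fun k _ => ?_
    have := hs k
    simp only [Function.comp_apply, RCLike.star_def, Complex.conj_ofReal]
    change _ * ((hF.isHermitian.eigenvalues k : ℝ) : ℂ) * _ = _
    rw [← this]
    ring
  · intro k l hkl
    have h1 := congrFun (congrFun (Unitary.coe_star_mul_self U) k) l
    rw [Matrix.one_apply_ne hkl, Matrix.mul_apply] at h1
    simp only [dotProduct, Pi.star_apply, star_mul', Matrix.star_apply] at h1 ⊢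
    calc _ = ((s k : ℂ) * s l) * ∑ i, star ((U : Matrix (Fin d) (Fin d) ℂ) i k)
          * (U : Matrix (Fin d) (Fin d) ℂ) i l := by
          rw [Finset.mul_sum]
          refine Finset.sum_congr rfl fun i _ => ?_
          simp only [RCLike.star_def, Complex.conj_ofReal]
          ring
      _ = 0 := by rw [h1, mul_zero]

lemma exists_unit_rankOne_eq_smul {d : ℕ} (hd : 1 ≤ d) (z : Fin d → ℂ) :
    ∃ (w : Fin d → ℂ) (t : ℂ), star w ⬝ᵥ w = 1 ∧ 0 ≤ t ∧ rankOne z = t • rankOne w := by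
  by_cases hz : z = 0
  · refine ⟨Pi.single ⟨0, hd⟩ 1, 0, by simp, le_rfl, ?_⟩
    ext i j
    simp [hz, rankOne, Matrix.vecMulVec_apply]
  · have hpos : 0 < star z ⬝ᵥ z := Matrix.dotProduct_star_self_pos_iff.mpr hz
    obtain ⟨r, hr, hrz⟩ : ∃ r : ℝ, 0 < r ∧ star z ⬝ᵥ z = (r : ℂ) := by
      obtain ⟨h1, h2⟩ := Complex.pos_iff.mp hpos
      exact ⟨_, h1, Complex.ext rfl (by simp [← h2])⟩
    have hsq : ((Real.sqrt r : ℝ) : ℂ) * (Real.sqrt r : ℝ) = r := by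
      rw [← Complex.ofReal_mul, Real.mul_self_sqrt hr.le]
    have hne : ((Real.sqrt r : ℝ) : ℂ) ≠ 0 := by
      exact_mod_cast (Real.sqrt_pos.mpr hr).ne'
    refine ⟨((Real.sqrt r : ℝ) : ℂ)⁻¹ • z, r, ?_, by exact_mod_cast hr.le, ?_⟩
    · rw [star_smul, smul_dotProduct, dotProduct_smul, hrz, ← hsq]
      simp [hne]
    · ext i j
      simp only [rankOne, Matrix.vecMulVec_apply, Matrix.smul_apply, Pi.smul_apply,
        Pi.star_apply, smul_eq_mul, star_mul', star_inv₀, RCLike.star_def, Complex.conj_ofReal,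
        ← hsq]
      field_simp

/-- The blocks of the unnormalized maximally entangled state are the matrix units, so its image
under `I_d ⊗ Φ` records `Φ`; separability of that image is the measure-and-prepare form. -/
lemma exists_sum_trace_smul {d : ℕ} (hd : 1 ≤ d)
    {Φ : Matrix (Fin d) (Fin d) ℂ → Matrix (Fin d) (Fin d) ℂ}
    (hlin : IsLinearMap ℂ Φ) (heb : EntBreaking Φ) :
    ∃ (N : ℕ) (A B : Fin N → Matrix (Fin d) (Fin d) ℂ),
      (∀ k, (A k).PosSemidef) ∧ (∀ k, (B k).PosSemidef) ∧
      ∀ ρ, Φ ρ = ∑ k, (A k * ρ).trace • B k := by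
  set β : Fin d × Fin d → ℂ := fun p => if p.1 = p.2 then 1 else 0
  obtain ⟨N, A, B, hA, hB, h⟩ :=
    heb d hd (Matrix.vecMulVec β (star β)) (Matrix.posSemidef_vecMulVec_self_star β)
  refine ⟨N, fun k => (A k)ᵀ, B, fun k => (hA k).transpose, hB, fun ρ => ?_⟩
  have h1 : ∀ i j, Φ (Matrix.single i j 1) = ∑ k, A k i j • B k := by
    intro i j
    have hβ : (fun a b => Matrix.vecMulVec β (star β) (i, a) (j, b)) = Matrix.single i j 1 := by
      ext a b
      by_cases h1 : i = a <;> by_cases h2 : j = b <;>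
        simp [β, Matrix.vecMulVec_apply, h1, h2]
    ext a b
    have := congrFun (congrFun h (i, a)) (j, b)
    simp only [tensorId] at this
    rw [hβ] at this
    rw [this]
    simp [Matrix.sum_apply]
  have h2 : Φ ρ = ∑ i, ∑ j, ρ i j • Φ (Matrix.single i j 1) := by
    conv_lhs => rw [Matrix.matrix_eq_sum_single ρ]
    let L : Matrix (Fin d) (Fin d) ℂ →ₗ[ℂ] Matrix (Fin d) (Fin d) ℂ := hlin.mk' Φ
    change L _ = ∑ i, ∑ j, ρ i j • L _
    simp only [map_sum, ← map_smul, Matrix.smul_single, smul_eq_mul, mul_one]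
  simp only [h2, h1, Finset.smul_sum, smul_smul, Matrix.trace, Matrix.diag, Matrix.mul_apply,
    Matrix.transpose_apply, Finset.sum_smul]
  rw [Finset.sum_congr rfl fun i _ => Finset.sum_comm, Finset.sum_comm]
  refine Finset.sum_congr rfl fun k _ => ?_
  rw [Finset.sum_comm]
  refine Finset.sum_congr rfl fun i _ => Finset.sum_congr rfl fun j _ => ?_
  rw [mul_comm]

lemma trace_rankOne_mul {d : ℕ} (v : Fin d → ℂ) (ρ : Matrix (Fin d) (Fin d) ℂ) :
    (rankOne v * ρ).trace = star v ⬝ᵥ ρ *ᵥ v := by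
  rw [rankOne, Matrix.trace_mul_comm, Matrix.mul_vecMulVec, Matrix.trace_vecMulVec,
    dotProduct_comm]

/-- Measure-and-prepare form of an entanglement breaking map with rank-one effects
`|v_i⟩⟨v_i|` and pure output states `w_i`. Effects with the same output state are first merged and
then diagonalized, so their vectors are orthogonal. -/
lemma exists_orthogonal_representation {d : ℕ} (hd : 1 ≤ d)
    {Φ : Matrix (Fin d) (Fin d) ℂ → Matrix (Fin d) (Fin d) ℂ}
    (hlin : IsLinearMap ℂ Φ) (heb : EntBreaking Φ) :
    ∃ (ι : Type) (_ : Fintype ι) (v w : ι → Fin d → ℂ),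
      (∀ i, star (w i) ⬝ᵥ w i = 1) ∧ (∀ i, v i ≠ 0) ∧
      (∀ i j, i ≠ j → rankOne (w i) = rankOne (w j) → star (v i) ⬝ᵥ v j = 0) ∧
      ∀ ρ, Φ ρ = ∑ i, (star (v i) ⬝ᵥ ρ *ᵥ v i) • rankOne (w i) := by
  classical
  obtain ⟨N, A, B, hA, hB, hΦ⟩ := exists_sum_trace_smul hd hlin heb
  choose z hz _ using fun k => exists_orthogonal_sum_rankOne (hB k)
  choose w t hw ht hwt using fun p : Fin N × Fin d => exists_unit_rankOne_eq_smul hd (z p.1 p.2)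
  set F : Fin N × Fin d → Matrix (Fin d) (Fin d) ℂ := fun p => t p • A p.1
  have hF : ∀ p, (F p).PosSemidef := fun p => (hA p.1).smul (ht p)
  have hΦF : ∀ ρ, Φ ρ = ∑ p, (F p * ρ).trace • rankOne (w p) := by
    intro ρ
    rw [hΦ, Fintype.sum_prod_type]
    refine Finset.sum_congr rfl fun k _ => ?_
    rw [hz k, Finset.smul_sum]
    refine Finset.sum_congr rfl fun l _ => ?_
    rw [hwt (k, l)]
    simp only [F, smul_mul_assoc, Matrix.trace_smul, smul_smul, smul_eq_mul]
    rw [mul_comm]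
  -- `q` runs over the output states, `r q` is a representative index for `q`.
  set Q := Finset.univ.image fun p => rankOne (w p)
  have hr : ∀ q : Q, ∃ p, rankOne (w p) = q.1 := fun q => by
    obtain ⟨p, -, hp⟩ := Finset.mem_image.mp q.2
    exact ⟨p, hp⟩
  choose r hr using hr
  set G : Q → Matrix (Fin d) (Fin d) ℂ :=
    fun q => ∑ p ∈ Finset.univ.filter (fun p => rankOne (w p) = q.1), F p
  have hG : ∀ q, (G q).PosSemidef := fun q => Matrix.posSemidef_sum _ fun p _ => hF p
  choose v hv hvo using fun q => exists_orthogonal_sum_rankOne (hG q)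
  refine ⟨{p : Q × Fin d // v p.1 p.2 ≠ 0}, inferInstance, fun i => v i.1.1 i.1.2,
    fun i => w (r i.1.1), fun i => hw _, fun i => i.2, ?_, fun ρ => ?_⟩
  · rintro ⟨⟨q, k⟩, hk⟩ ⟨⟨q', l⟩, hl⟩ hne heq
    obtain rfl : q = q' := Subtype.ext (by simpa only [hr] using heq)
    refine hvo q k l ?_
    rintro rfl
    exact hne rfl
  · calc Φ ρ = ∑ q : Q, (G q * ρ).trace • q.1 := by
          rw [hΦF, Finset.sum_coe_sort Q fun q =>
            ((∑ p ∈ Finset.univ.filter (fun p => rankOne (w p) = q), F p) * ρ).trace • q,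
            ← Finset.sum_fiberwise_of_maps_to (t := Q) (g := fun p => rankOne (w p))
              (fun p hp => Finset.mem_image_of_mem _ hp)]
          refine Finset.sum_congr rfl fun q _ => ?_
          rw [Finset.sum_mul, Matrix.trace_sum, Finset.sum_smul]
          refine Finset.sum_congr rfl fun p hp => ?_
          rw [(Finset.mem_filter.mp hp).2]
      _ = ∑ p : Q × Fin d, (star (v p.1 p.2) ⬝ᵥ ρ *ᵥ v p.1 p.2) • rankOne (w (r p.1)) := by
          rw [Fintype.sum_prod_type]
          refine Finset.sum_congr rfl fun q _ => ?_
          rw [hv q, Finset.sum_mul, Matrix.trace_sum, Finset.sum_smul]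
          refine Finset.sum_congr rfl fun k _ => ?_
          rw [trace_rankOne_mul, hr]
      _ = _ := by
          rw [← Fintype.sum_subtype_add_sum_subtype (fun p : Q × Fin d => v p.1 p.2 ≠ 0)]
          refine add_eq_left.mpr (Finset.sum_eq_zero fun p _ => ?_)
          rw [not_not.mp p.2]
          simp
/-! ### Independence of the Kraus operators and the theorem -/

lemma krausTerm_vecMulVec {d : ℕ} (w v : Fin d → ℂ) (ρ : Matrix (Fin d) (Fin d) ℂ) :
    krausTerm (Matrix.vecMulVec w (star v)) ρ = (star v ⬝ᵥ ρ *ᵥ v) • rankOne w := by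
  rw [krausTerm, Matrix.conjTranspose_vecMulVec, star_star, Matrix.mul_assoc,
    Matrix.mul_vecMulVec, Matrix.vecMulVec_mul_vecMulVec, rankOne, Matrix.vecMulVec_smul]

lemma eq_zero_of_sum_vecMulVec_eq_zero {d : ℕ} {κ : Type*} [Fintype κ] {u : κ → Fin d → ℂ}
    (hu : LinearIndependent ℂ u) {x : κ → Fin d → ℂ}
    (h : ∑ k, Matrix.vecMulVec (x k) (u k) = 0) (k : κ) : x k = 0 := by
  ext r
  refine Fintype.linearIndependent_iff.mp hu (fun k => x k r) ?_ k
  ext s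
  simpa [Matrix.sum_apply, Matrix.vecMulVec_apply] using congrFun (congrFun h r) s

lemma eq_smul_of_rankOne {d : ℕ} {x y : Fin d → ℂ} {c c' : ℂ} (hc : c ≠ 0)
    (hx : star x ⬝ᵥ x = 1) (hy : star y ⬝ᵥ y = 1) (h : c • x = c' • y) :
    rankOne x = rankOne y := by
  obtain ⟨t, rfl⟩ : ∃ t : ℂ, x = t • y :=
    ⟨c⁻¹ * c', by rw [mul_smul, ← h, smul_smul, inv_mul_cancel₀ hc, one_smul]⟩
  have ht : t * star t = 1 := by
    rw [star_smul, smul_dotProduct, dotProduct_smul, hy] at hx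
    simpa [mul_comm] using hx
  rw [rankOne, rankOne, star_smul, Matrix.smul_vecMulVec, Matrix.vecMulVec_smul, smul_smul, ht,
    one_smul]

/-- The Kraus operators `|w_i⟩⟨v_i|` of an orthogonal representation: if `v ∘ a` is a basis and `j`
is outside the range of `a`, then adjoining `|w_j⟩⟨v_j|` keeps them linearly independent. In a
relation `|w_j⟩⟨v_j| = ∑ c_k |w_k⟩⟨v_k|`, expanding `⟨v_j|` in the basis shows that `w_k` is parallel
to `w_j` whenever `c_k ≠ 0`; then `v_k ⟂ v_j`, and applying both sides to `v_j` gives `w_j = 0`. -/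
lemma linearIndependent_option_kraus {d : ℕ} {ι κ : Type*} [Fintype κ] {v w : ι → Fin d → ℂ}
    (hw : ∀ i, star (w i) ⬝ᵥ w i = 1) (hv : ∀ i, v i ≠ 0)
    (hvo : ∀ i j, i ≠ j → rankOne (w i) = rankOne (w j) → star (v i) ⬝ᵥ v j = 0)
    {a : κ → ι} (hli : LinearIndependent ℂ fun k => star (v (a k)))
    (hspan : Submodule.span ℂ (Set.range fun k => star (v (a k))) = ⊤)
    {j : ι} (hj : ∀ k, a k ≠ j) :
    LinearIndependent ℂ fun o : Option κ =>
      Matrix.vecMulVec (w (o.elim j a)) (star (v (o.elim j a))) := by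
  have hw0 : ∀ i, w i ≠ 0 := fun i h => by simpa [h] using hw i
  rw [linearIndependent_option]
  constructor
  · rw [Fintype.linearIndependent_iff]
    intro c hc k
    simp only [Function.comp_apply, Option.elim_some, ← Matrix.smul_vecMulVec] at hc
    exact (smul_eq_zero.mp (eq_zero_of_sum_vecMulVec_eq_zero hli hc k)).resolve_right (hw0 _)
  · intro hmem
    obtain ⟨c, hc⟩ := Submodule.mem_span_range_iff_exists_fun ℂ |>.mp hmem
    obtain ⟨g, hg⟩ := Submodule.mem_span_range_iff_exists_fun ℂ |>.mp
      (hspan ▸ Submodule.mem_top : star (v j) ∈ _)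
    simp only [Function.comp_apply, Option.elim_some, Option.elim_none] at hc
    have hcg : ∀ k, c k • w (a k) = g k • w j := by
      intro k
      rw [← sub_eq_zero]
      refine eq_zero_of_sum_vecMulVec_eq_zero hli (x := fun k => c k • w (a k) - g k • w j) ?_ k
      simp only [Matrix.sub_vecMulVec, Finset.sum_sub_distrib, Matrix.smul_vecMulVec, hc]
      rw [← hg, sub_eq_zero]
      ext r s
      simp only [Matrix.vecMulVec_apply, Matrix.sum_apply, Matrix.smul_apply, Finset.sum_apply,
        Pi.smul_apply, smul_eq_mul, Finset.mul_sum]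
      exact Finset.sum_congr rfl fun k _ => by ring
    have happ := congrArg (· *ᵥ v j) hc
    have hz : ∀ k, (c k • Matrix.vecMulVec (w (a k)) (star (v (a k)))) *ᵥ v j = 0 := by
      intro k
      by_cases hck : c k = 0
      · simp [hck]
      · have := hvo (a k) j (hj k) (eq_smul_of_rankOne hck (hw _) (hw _) (hcg k))
        rw [Matrix.smul_mulVec, Matrix.vecMulVec_mulVec, this]
        simp
    simp only [Matrix.sum_mulVec, hz, Finset.sum_const_zero, Matrix.vecMulVec_mulVec] at happ
    have h0 : star (v j) ⬝ᵥ v j ≠ 0 := (Matrix.dotProduct_star_self_pos_iff.mpr (hv j)).ne'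
    have := happ.symm
    simp [h0, hw0] at this

/-- Theorem 3, part C: an EBT map which is an extreme point of the set of
CPT maps is an extreme CQ map. -/
theorem ebt_extreme_in_cptp_is_extreme_cq
    {d : ℕ} (Φ : Matrix (Fin d) (Fin d) ℂ → Matrix (Fin d) (Fin d) ℂ)
    (hEBT : IsEBT Φ) (hext : IsExtremePointOf IsCPTP Φ) :
    ∃ (ψ e : Fin d → (Fin d → ℂ)),
      (∀ j k, star (e j) ⬝ᵥ e k = if j = k then 1 else 0) ∧
      (∀ k, star (ψ k) ⬝ᵥ ψ k = 1) ∧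
      ∀ ρ, Φ ρ = ∑ k, (star (e k) ⬝ᵥ ρ *ᵥ e k) • rankOne (ψ k) := by

  classical
  rcases Nat.eq_zero_or_pos d with rfl | hd
  · exact ⟨fun k => k.elim0, fun k => k.elim0, fun k => k.elim0, fun k => k.elim0,
      fun ρ => Subsingleton.elim _ _⟩
  obtain ⟨⟨hlin, -, htr⟩, heb⟩ := hEBT
  obtain ⟨ι, _, v, w, hw, hv, hvo, hΦ⟩ := exists_orthogonal_representation hd hlin heb
  have hres : ∑ i, rankOne (v i) = 1 := by
    refine Matrix.ext_iff_trace_mul_right.mpr fun ρ => ?_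
    rw [one_mul, ← htr ρ, hΦ, Finset.sum_mul, Matrix.trace_sum, Matrix.trace_sum]
    refine Finset.sum_congr rfl fun i _ => ?_
    rw [trace_rankOne_mul, Matrix.trace_smul, rankOne, Matrix.trace_vecMulVec,
      dotProduct_comm (w i), hw, smul_eq_mul, mul_one]
  have hspan : Submodule.span ℂ (Set.range fun i => star (v i)) = ⊤ := by
    refine eq_top_iff.mpr fun x _ => (Submodule.mem_span_range_iff_exists_fun ℂ).mpr
      ⟨fun i => x ⬝ᵥ v i, ?_⟩
    calc ∑ i, (x ⬝ᵥ v i) • star (v i) = x ᵥ* ∑ i, rankOne (v i) := by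
          rw [Matrix.vecMul_sum]
          exact Finset.sum_congr rfl fun i _ => (Matrix.vecMul_vecMulVec _ _ _).symm
      _ = x := by rw [hres, Matrix.vecMul_one]
  obtain ⟨κ, a, ha, hsp, hli⟩ := exists_linearIndependent' ℂ fun i => star (v i)
  have := Fintype.ofInjective a ha
  rw [hspan] at hsp
  have hcard : Fintype.card κ = d := by
    have := Module.finrank_eq_card_basis (Module.Basis.mk hli hsp.ge)
    simpa using this.symm
  have hsurj : Function.Surjective a := by
    by_contra hns
    obtain ⟨j, hj⟩ : ∃ j, ∀ k, a k ≠ j := by simpa [Function.Surjective] using hns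
    set m : Option κ → ι := fun o => o.elim j a
    have hm : Function.Injective m := by
      rintro (_ | k) (_ | l) h
      · rfl
      · exact absurd h.symm (hj l)
      · exact absurd h (hj k)
      · exact congrArg some (ha h)
    have hle := card_le_of_extreme hext
      (completelyPositive_sum_krausTerm (Finset.univ.image m)ᶜ
        fun i => Matrix.vecMulVec (w i) (star (v i))) (fun ρ => ?_)
      (linearIndependent_option_kraus hw hv hvo hli hsp hj)
    · rw [Fintype.card_option, hcard] at hle
      omega
    · rw [hΦ, ← Finset.sum_compl_add_sum (Finset.univ.image m), Finset.sum_image hm.injOn]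
      simp only [krausTerm_vecMulVec, m]
  let b : Fin d ≃ ι := (Fintype.equivFinOfCardEq hcard).symm.trans
    (Equiv.ofBijective a ⟨ha, hsurj⟩)
  refine ⟨fun k => w (b k), fun k => v (b k), ?_, fun k => hw _, fun ρ => ?_⟩
  · -- `V Vᴴ = 1` for the square matrix `V` with columns `v (b k)`, hence `Vᴴ V = 1`.
    set V : Matrix (Fin d) (Fin d) ℂ := Matrix.of fun i k => v (b k) i
    have hV : V * Vᴴ = 1 := by
      rw [← hres, ← b.sum_comp]
      ext i j
      simp [V, Matrix.mul_apply, Matrix.sum_apply, rankOne, Matrix.vecMulVec_apply]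
    have hV' : Vᴴ * V = 1 := mul_eq_one_comm.mp hV
    intro j k
    have := congrFun (congrFun hV' j) k
    rw [Matrix.one_apply] at this
    rw [← this]
    rfl
  · rw [hΦ, ← b.sum_comp]
end
end

section
/- Let Φ be a completely positive trace-preserving linear map on d×d complex matrices whose Choi matrix (I_d ⊗ Φ)(|β⟩⟨β|) has rank equal to d. Then Φ is entanglement breaking if and only if T ∘ Φ is completely positive, where T is the transpose map on d×d matrices. -/
/-!
An entanglement breaking `Φ` sends `Γ ≥ 0` to some `∑ A s ⊗ B s`, and transposing the second
factors gives `∑ A s ⊗ (B s)ᵀ ≥ 0`; this is the direct implication.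

For the converse, let `J = ∑ |i⟩⟨j| ⊗ Φ |i⟩⟨j|` be the unnormalised Choi matrix and `G` its partial
transpose; both are positive semidefinite. Trace preservation makes the partial traces of `J` and
`G` over the second factor equal to `1`, so the reduction criterion, applied to each with the other
as its partial transpose, yields `J ≤ 1` and `G ≤ 1` (`one_sub_posSemidef_of_pTranspose`). As
`tr J = d = rank J`, the matrix `J` is a projection (`idem_of_trace_eq_rank`). As
`tr G² = tr J² = d = tr G`, so is `G` (`pTranspose_idem`).

Let `B a b` be the blocks of `J` indexed by the second factor. Expanding
`∑ ‖B a b * B c d - B a d * B c b‖²` and contracting with `J² = J`, `G² = G`, `∑ B a a = 1` gives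
zero, so `B a b * B c d = B a d * B c b` (`exchange`). Together with its adjoint this shows that the
blocks commute (`blocks_commute`). Since they are closed under adjoints, they are simultaneously
diagonalisable in an orthonormal basis `v`, and `J = ∑ s, |v s⟩⟨v s| ⊗ p s` with `p s ≥ 0`
(`exists_spectral_blocks`). Hence `Φ` has measure-and-prepare form and is entanglement breaking.
-/

open Matrix Kronecker BigOperators ComplexOrder

noncomputable section

/-! ### The reduction criterion and projections -/

section Aux
variable {m n : Type*} [Fintype m] [Fintype n] [DecidableEq m] [DecidableEq n]

/-- Partial transpose on the second tensor factor. -/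
def pTranspose (J : Matrix (m × n) (m × n) ℂ) : Matrix (m × n) (m × n) ℂ :=
  Matrix.of fun p q => J (p.1, q.2) (q.1, p.2)

/-- The `(a, b)` block of `J`, viewed as an `n × n` array of `m × m` matrices: the blocks are
indexed by the second tensor factor. -/
def blk (J : Matrix (m × n) (m × n) ℂ) (a b : n) : Matrix m m ℂ :=
  Matrix.of fun i j => J (i, a) (j, b)

/-- Reduction criterion: if the partial transpose is positive and the partial trace over the second
factor is the identity, then `J ≤ 1`. The reason is that `X ↦ tr X • 1 - Xᵀ` is completely
positive. -/
theorem one_sub_posSemidef_of_pTranspose {J : Matrix (m × n) (m × n) ℂ}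
    (htr : ∀ i j, ∑ a, J (i, a) (j, a) = if i = j then 1 else 0)
    (hG : (pTranspose J).PosSemidef) : (1 - J).PosSemidef := by
  -- `K a b = 1 ⊗ (|a⟩⟨b| - |b⟩⟨a|)`: up to a factor these are Kraus operators of
  -- `id ⊗ (X ↦ tr X • 1 - Xᵀ)`.
  let K : n → n → Matrix (m × n) (m × n) ℂ := fun a b =>
    Matrix.of fun p q => if p.1 = q.1 then
      (if p.2 = a ∧ q.2 = b then 1 else 0) - (if p.2 = b ∧ q.2 = a then 1 else 0) else 0
  have hS : (∑ a, ∑ b, (K a b)ᴴ * pTranspose J * K a b).PosSemidef :=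
    Matrix.posSemidef_sum _ fun a _ => Matrix.posSemidef_sum _ fun b _ =>
      hG.conjTranspose_mul_mul_same _
  have hE : ∑ a, ∑ b, (K a b)ᴴ * pTranspose J * K a b = (2 : ℝ) • (1 - J) := by
    have key : ∀ a b i c j e, ((K a b)ᴴ * pTranspose J * K a b) (i, c) (j, e) =
        (if b = c then (if b = e then J (i, a) (j, a) else 0) else 0)
        + (if a = c then (if a = e then J (i, b) (j, b) else 0) else 0)
        - (if b = c then (if a = e then J (i, b) (j, a) else 0) else 0)
        - (if a = c then (if b = e then J (i, a) (j, b) else 0) else 0) := by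
      intro a b i c j e
      have hr : ∀ (M : Matrix (m × n) (m × n) ℂ) p, (M * K a b) p (j, e) =
          (if b = e then M p (j, a) else 0) - (if a = e then M p (j, b) else 0) := by
        intro M p
        simp [K, Matrix.mul_apply, Fintype.sum_prod_type, mul_sub, ite_and, eq_comm (a := e) (b := a),
          eq_comm (a := e) (b := b)]
      have hl : ∀ (M : Matrix (m × n) (m × n) ℂ) q, ((K a b)ᴴ * M) (i, c) q =
          (if b = c then M (i, a) q else 0) - (if a = c then M (i, b) q else 0) := by
        intro M q
        simp [K, Matrix.mul_apply, Fintype.sum_prod_type, sub_mul, ite_and, eq_comm (a := c) (b := a),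
          eq_comm (a := c) (b := b), apply_ite (star : ℂ → ℂ)]
      rw [hr, hl, hl]
      simp only [pTranspose, Matrix.of_apply]
      split_ifs <;> ring
    ext ⟨i, c⟩ ⟨j, e⟩
    simp only [Matrix.sum_apply, key, Finset.sum_sub_distrib, Finset.sum_add_distrib]
    simp [Matrix.one_apply, htr]
    rw [ite_and]
    split_ifs <;> ring
  have h2 := hS.smul (a := (1 / 2 : ℝ)) (by norm_num)
  rw [hE, smul_smul] at h2
  simpa using h2

/-- Positive semidefinite matrices with vanishing Hilbert-Schmidt inner product are orthogonal. -/
theorem mul_eq_zero_of_trace {A B : Matrix m m ℂ} (hA : A.PosSemidef) (hB : B.PosSemidef)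
    (h : (A * B).trace = 0) : A * B = 0 := by
  obtain ⟨C, rfl⟩ : ∃ C : Matrix m m ℂ, A = Cᴴ * C := by
    open scoped MatrixOrder in
    exact CStarAlgebra.nonneg_iff_eq_star_mul_self.mp hA.nonneg
  obtain ⟨D, rfl⟩ : ∃ C : Matrix m m ℂ, B = Cᴴ * C := by
    open scoped MatrixOrder in
    exact CStarAlgebra.nonneg_iff_eq_star_mul_self.mp hB.nonneg
  have h0 : C * Dᴴ = 0 := by
    rw [← Matrix.trace_conjTranspose_mul_self_eq_zero_iff, ← h, Matrix.conjTranspose_mul,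
      Matrix.conjTranspose_conjTranspose, Matrix.mul_assoc, Matrix.trace_mul_comm]
    simp only [Matrix.mul_assoc]
  rw [Matrix.mul_assoc, ← Matrix.mul_assoc C, h0]; simp

/-- The eigenvalues lie in `[0, 1]`, and those that are nonzero have average `1`, so all of them are
`0` or `1` and `A` is a projection. -/
theorem idem_of_trace_eq_rank {A : Matrix m m ℂ} (hA : A.PosSemidef)
    (h1 : (1 - A).PosSemidef) (htr : A.trace = A.rank) : A * A = A := by
  have hle : ∀ i, hA.1.eigenvalues i ≤ 1 := by
    intro i
    have h := h1.re_dotProduct_nonneg (hA.1.eigenvectorBasis i)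
    have h' := hA.1.eigenvalues_eq i
    have hn : star (⇑(hA.1.eigenvectorBasis i)) ⬝ᵥ (⇑(hA.1.eigenvectorBasis i)) = 1 := by
      have := hA.1.eigenvectorBasis.orthonormal.1 i
      rw [dotProduct_comm, ← EuclideanSpace.inner_eq_star_dotProduct]
      simp [this]
    rw [Matrix.sub_mulVec, Matrix.one_mulVec, dotProduct_sub, hn, map_sub, ← h'] at h
    simpa using h
  have hsum : ∑ i, ((if hA.1.eigenvalues i ≠ 0 then (1:ℝ) else 0) - hA.1.eigenvalues i) = 0 := by
    have h2 := hA.1.trace_eq_sum_eigenvalues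
    rw [htr, hA.1.rank_eq_card_non_zero_eigs, Fintype.card_subtype] at h2
    rw [Finset.sum_sub_distrib, Finset.sum_boole, sub_eq_zero]
    have h3 := congrArg Complex.re h2
    simpa using h3
  have hall := (Finset.sum_eq_zero_iff_of_nonneg (fun i _ => by
    have := hle i
    split_ifs with h0
    · linarith
    · simp at h0; simp [h0])).1 hsum
  have h01 : ∀ i, hA.1.eigenvalues i * hA.1.eigenvalues i = hA.1.eigenvalues i := by
    intro i
    have := hall i (Finset.mem_univ i)
    split_ifs at this with h0
    · rw [show hA.1.eigenvalues i = 1 by linarith]; simp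
    · simp at h0; simp [h0]
  have hs := hA.1.spectral_theorem
  rw [hs, ← map_mul, Matrix.diagonal_mul_diagonal]
  congr 2
  ext i
  have := h01 i
  simp only [Function.comp]
  exact_mod_cast congrArg (fun x : ℝ => (x : ℂ)) this

/-- Partial transposition preserves `tr J²`, which for Hermitian `J` is the squared Hilbert-Schmidt
norm. -/
theorem trace_pTranspose_sq (J : Matrix (m × n) (m × n) ℂ) :
    (pTranspose J * pTranspose J).trace = (J * J).trace := by
  simp only [Matrix.trace, Matrix.diag, Matrix.mul_apply, pTranspose, Matrix.of_apply,
    Fintype.sum_prod_type]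
  refine Finset.sum_congr rfl fun i _ => ?_
  rw [Finset.sum_comm]
  symm
  rw [Finset.sum_comm]
  exact Finset.sum_congr rfl fun j _ => Finset.sum_comm

theorem pTranspose_idem {J : Matrix (m × n) (m × n) ℂ} (hJ : J * J = J)
    (hG : (pTranspose J).PosSemidef) (h1 : (1 - pTranspose J).PosSemidef) :
    pTranspose J * pTranspose J = pTranspose J := by
  have h := mul_eq_zero_of_trace hG h1 (by
    rw [Matrix.mul_sub, Matrix.trace_sub, trace_pTranspose_sq, hJ]
    simp [Matrix.trace, pTranspose])
  rw [Matrix.mul_sub, Matrix.mul_one, sub_eq_zero] at h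
  exact h.symm

/-! ### Commutation of the blocks -/

theorem blk_sum_mul {J : Matrix (m × n) (m × n) ℂ} (hJ : J * J = J) (a c : n) :
    ∑ b, blk J a b * blk J b c = blk J a c := by
  ext i j
  conv_rhs => rw [blk, Matrix.of_apply, ← hJ]
  simp only [Matrix.sum_apply, Matrix.mul_apply, blk, Matrix.of_apply, Fintype.sum_prod_type]
  exact Finset.sum_comm

/-- The hypotheses `hP` and `hG` say that the block matrix `(B a b)` and its partial transpose
`(B b a)` are idempotent. Then the second block indices in a product of two blocks may be
exchanged. -/
theorem exchange {B : n → n → Matrix m m ℂ} (hstar : ∀ a b, (B a b)ᴴ = B b a)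
    (hP : ∀ a c, ∑ b, B a b * B b c = B a c) (hG : ∀ a c, ∑ b, B b a * B c b = B c a)
    (h1 : ∑ a, B a a = 1) (a b c d : n) : B a b * B c d = B a d * B c b := by
  let X : n → n → n → n → Matrix m m ℂ := fun a b c d => B a b * B c d - B a d * B c b
  have hX : ∀ a b c d, X a b c d * (X a b c d)ᴴ =
      B a b * (B c d * B d c) * B b a - B a b * (B c d * B b c) * B d a
      - B a d * (B c b * B d c) * B b a + B a d * (B c b * B b c) * B d a := by
    intro a b c d
    simp only [X, Matrix.conjTranspose_sub, Matrix.conjTranspose_mul, hstar]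
    noncomm_ring
  -- Each of the four terms of `hX` sums to the identity, so `∑ X Xᴴ = 1 - 1 - 1 + 1 = 0`.
  have T1 : ∑ a, ∑ b, ∑ d, ∑ c, B a b * (B c d * B d c) * B b a = 1 := by
    have : ∑ d, ∑ c, B c d * B d c = 1 := by
      rw [Finset.sum_comm]; simp only [hP, h1]
    simp only [← Finset.mul_sum, ← Finset.sum_mul, this, mul_one, hP, h1]
  have T4 : ∑ a, ∑ b, ∑ d, ∑ c, B a d * (B c b * B b c) * B d a = 1 := by
    rw [← T1]
    exact Finset.sum_congr rfl fun a _ => Finset.sum_comm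
  have T2 : ∑ a, ∑ b, ∑ d, ∑ c, B a b * (B c d * B b c) * B d a = 1 := by
    simp only [← Finset.mul_sum, ← Finset.sum_mul, hG]
    have : ∀ a, ∑ b, ∑ d, B a b * B b d * B d a = B a a := by
      intro a
      rw [Finset.sum_comm]; simp only [← Finset.sum_mul, hP]
    simp only [this, h1]
  have T3 : ∑ a, ∑ b, ∑ d, ∑ c, B a d * (B c b * B d c) * B b a = 1 := by
    rw [← T2]
    exact Finset.sum_congr rfl fun a _ => Finset.sum_comm
  have hsum : ∑ a, ∑ b, ∑ d, ∑ c, (X a b c d * (X a b c d)ᴴ).trace = 0 := by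
    simp only [← Matrix.trace_sum, hX, Finset.sum_add_distrib, Finset.sum_sub_distrib,
      T1, T2, T3, T4]
    simp
  have hnn : ∀ a b c d, 0 ≤ (X a b c d * (X a b c d)ᴴ).trace := fun a b c d =>
    (Matrix.posSemidef_self_mul_conjTranspose _).trace_nonneg
  have e1 := (Finset.sum_eq_zero_iff_of_nonneg (fun a _ => Finset.sum_nonneg fun b _ =>
    Finset.sum_nonneg fun d _ => Finset.sum_nonneg fun c _ => hnn a b c d)).1 hsum a
      (Finset.mem_univ a)
  have e2 := (Finset.sum_eq_zero_iff_of_nonneg (fun b _ =>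
    Finset.sum_nonneg fun d _ => Finset.sum_nonneg fun c _ => hnn a b c d)).1 e1 b
      (Finset.mem_univ b)
  have e3 := (Finset.sum_eq_zero_iff_of_nonneg (fun d _ =>
    Finset.sum_nonneg fun c _ => hnn a b c d)).1 e2 d (Finset.mem_univ d)
  have e4 := (Finset.sum_eq_zero_iff_of_nonneg (fun c _ => hnn a b c d)).1 e3 c
    (Finset.mem_univ c)
  exact sub_eq_zero.1 (Matrix.trace_mul_conjTranspose_self_eq_zero_iff.1 e4)

theorem blocks_commute {B : n → n → Matrix m m ℂ} (hstar : ∀ a b, (B a b)ᴴ = B b a)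
    (hex : ∀ a b c d, B a b * B c d = B a d * B c b) (a b c d : n) :
    B a b * B c d = B c d * B a b := by
  have h := congrArg Matrix.conjTranspose (hex d a b c)
  simp only [Matrix.conjTranspose_mul, hstar] at h
  rw [← h, hex]


/-! ### Simultaneous diagonalisation -/

/-- A commuting family of matrices closed under conjugate transposition has an orthonormal basis of
joint eigenvectors. -/
theorem exists_joint_eigenbasis {ι : Type*} {B : ι → Matrix m m ℂ} {σ : ι → ι}
    (hstar : ∀ x, (B x)ᴴ = B (σ x)) (hcomm : ∀ x y, B x * B y = B y * B x) :
    ∃ (v : OrthonormalBasis (Fin (Fintype.card m)) ℂ (EuclideanSpace ℂ m))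
      (μ : ι → Fin (Fintype.card m) → ℂ),
      ∀ x s, (B x).toEuclideanLin (v s) = μ x s • v s := by
  classical
  -- Hermitian and anti-Hermitian parts (up to scalars), to reduce to commuting Hermitian matrices.
  let H : ι × Bool → Matrix m m ℂ := fun p =>
    if p.2 then B p.1 + B (σ p.1) else Complex.I • (B p.1 - B (σ p.1))
  have hσ : ∀ x, B (σ (σ x)) = B x := fun x => by
    rw [← hstar, ← hstar, Matrix.conjTranspose_conjTranspose]
  have hH : ∀ p, (H p).IsHermitian := by
    rintro ⟨x, _ | _⟩
    · simp [H, Matrix.IsHermitian, hstar, hσ, smul_sub, neg_add_eq_sub]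
    · simp [H, Matrix.IsHermitian, hstar, hσ, add_comm]
  have hHc : ∀ p q, H p * H q = H q * H p := by
    have hc : ∀ x y, Commute (B x) (B y) := hcomm
    intro p q
    change Commute (H p) (H q)
    have h1 : ∀ x p, Commute (B x) (H p) := by
      rintro x ⟨y, _ | _⟩
      · simpa [H] using ((hc x y).sub_right (hc x (σ y))).smul_right Complex.I
      · simpa [H] using (hc x y).add_right (hc x (σ y))
    obtain ⟨y, _ | _⟩ := p
    · simpa [H] using ((h1 y q).sub_left (h1 (σ y) q)).smul_left Complex.I
    · simpa [H] using (h1 y q).add_left (h1 (σ y) q)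
  let T : ι × Bool → EuclideanSpace ℂ m →ₗ[ℂ] EuclideanSpace ℂ m := fun p =>
    (H p).toEuclideanLin
  have hT : ∀ p, (T p).IsSymmetric := fun p => Matrix.isSymmetric_toEuclideanLin_iff.2 (hH p)
  have hTc : Pairwise (Function.onFun Commute T) := by
    intro p q _
    change T p * T q = T q * T p
    ext v : 1
    have h := congrArg (fun M : Matrix m m ℂ => M.toEuclideanLin v) (hHc p q)
    apply WithLp.ofLp_injective
    simpa [T, Matrix.toLpLin_apply, Matrix.mulVec_mulVec] using congrArg WithLp.ofLp h
  let V : (ι × Bool → ℂ) → Submodule ℂ (EuclideanSpace ℂ m) := fun α =>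
    ⨅ p, Module.End.eigenspace (T p) (α p)
  have hV : DirectSum.IsInternal V :=
    LinearMap.IsSymmetric.directSum_isInternal_of_pairwise_commute hT hTc
  have hO := LinearMap.IsSymmetric.orthogonalFamily_iInf_eigenspaces hT
  -- There are infinitely many tuples of candidate eigenvalues; only the finitely many nonzero joint
  -- eigenspaces are kept.
  have hV' := DirectSum.isInternal_ne_bot_iff.2 hV
  have hO' : OrthogonalFamily ℂ (fun i : {α // V α ≠ ⊥} => V i) fun i => (V i).subtypeₗᵢ :=
    hO.comp Subtype.val_injective
  have : Fintype {α // V α ≠ ⊥} :=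
    (WellFoundedGT.finite_ne_bot_of_iSupIndep hV.submodule_iSupIndep).fintype
  have hn : Module.finrank ℂ (EuclideanSpace ℂ m) = Fintype.card m := finrank_euclideanSpace
  let v := hV'.subordinateOrthonormalBasis hn hO'
  let α : Fin (Fintype.card m) → ι × Bool → ℂ := fun s =>
    (hV'.subordinateOrthonormalBasisIndex hn s hO').1
  have hv : ∀ s p, T p (v s) = α s p • v s := by
    intro s p
    have h : v s ∈ V (α s) := hV'.subordinateOrthonormalBasis_subordinate hn s hO'
    exact Module.End.mem_eigenspace_iff.1 ((Submodule.mem_iInf _).1 h p)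
  refine ⟨v, fun x s => (1 / 2 : ℂ) * (α s (x, true) - Complex.I * α s (x, false)), ?_⟩
  intro x s
  have hB : B x = (1 / 2 : ℂ) • (H (x, true) - Complex.I • H (x, false)) := by
    simp only [H, if_true, Bool.false_eq_true, if_false, smul_smul, Complex.I_mul_I]
    module
  have e1 := hv s (x, true)
  have e2 := hv s (x, false)
  simp only [T] at e1 e2
  rw [hB, map_smul, map_sub, map_smul, LinearMap.smul_apply, LinearMap.sub_apply,
    LinearMap.smul_apply, e1, e2]
  module

/-- If the blocks of `J ≥ 0` commute, then `J = ∑ s, |v s⟩⟨v s| ⊗ p s` with `p s ≥ 0`: the `v s` are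
joint eigenvectors and `p s` is the matrix of their eigenvalues. -/
theorem exists_spectral_blocks {J : Matrix (m × n) (m × n) ℂ} (hJ : J.PosSemidef)
    (hcomm : ∀ a b c d, blk J a b * blk J c d = blk J c d * blk J a b) :
    ∃ (v : Fin (Fintype.card m) → m → ℂ) (p : Fin (Fintype.card m) → Matrix n n ℂ),
      (∀ s, (p s).PosSemidef) ∧
      ∀ i a j b, J (i, a) (j, b) = ∑ s, (v s i * star (v s j)) * p s a b := by
  have hstar : ∀ a b, (blk J a b)ᴴ = blk J b a := by
    intro a b
    ext i j
    simpa [blk] using hJ.1.apply (i, b) (j, a)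
  obtain ⟨v, μ, hv⟩ := exists_joint_eigenbasis (B := fun x : n × n => blk J x.1 x.2)
    (σ := Prod.swap) (fun x => hstar _ _) (fun x y => hcomm _ _ _ _)
  -- `W s = |v s⟩ ⊗ 1`, so `(W s)ᴴ J (W s)` is the compression of `J` to `v s`.
  let W : Fin (Fintype.card m) → Matrix (m × n) n ℂ := fun s =>
    Matrix.of fun q b => if q.2 = b then v s q.1 else 0
  refine ⟨fun s i => v s i, fun s => (W s)ᴴ * J * W s,
    fun s => hJ.conjTranspose_mul_mul_same _, ?_⟩
  have hp : ∀ s a b, ((W s)ᴴ * J * W s) a b = μ (a, b) s := by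
    intro s a b
    have h1 : ((W s)ᴴ * J * W s) a b = star (⇑(v s)) ⬝ᵥ (blk J a b *ᵥ ⇑(v s)) := by
      simp [W, Matrix.mul_apply, Fintype.sum_prod_type, blk, dotProduct, Matrix.mulVec,
        Finset.sum_mul, Finset.mul_sum, apply_ite (star : ℂ → ℂ)]
      rw [Finset.sum_comm]
      simp only [mul_assoc]
    have h2 : blk J a b *ᵥ ⇑(v s) = μ (a, b) s • ⇑(v s) := by
      simpa [Matrix.toLpLin_apply] using congrArg WithLp.ofLp (hv (a, b) s)
    have hn : star (⇑(v s)) ⬝ᵥ (⇑(v s)) = 1 := by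
      have := v.orthonormal.1 s
      rw [dotProduct_comm, ← EuclideanSpace.inner_eq_star_dotProduct]
      simp [this]
    rw [h1, h2, dotProduct_smul, hn, smul_eq_mul, mul_one]
  intro i a j b
  simp only [hp]
  have h := v.sum_repr (EuclideanSpace.single j (1 : ℂ))
  have h' := congrArg (fun z => (blk J a b).toEuclideanLin z i) h
  simp only [map_sum, map_smul, hv (a, b)] at h'
  simp [blk, Matrix.toLpLin_apply, OrthonormalBasis.repr_apply_apply,
    EuclideanSpace.inner_single_right] at h'
  rw [← h']
  refine Finset.sum_congr rfl fun s _ => ?_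
  simp
  ring

end Aux


/-! ### Choi matrices and entanglement breaking maps -/

section Choi
variable {d : ℕ}

/-- The Choi matrix without the factor `1 / d`: its `(i, j)` block in the first tensor factor is
`Φ |i⟩⟨j|`. -/
def unnormChoi (Φ : Matrix (Fin d) (Fin d) ℂ → Matrix (Fin d) (Fin d) ℂ) :
    Matrix (Fin d × Fin d) (Fin d × Fin d) ℂ :=
  Matrix.of fun p q => Φ (Matrix.single p.1 q.1 1) p.2 q.2

theorem tensorId_eq_unnormChoi (Φ : Matrix (Fin d) (Fin d) ℂ → Matrix (Fin d) (Fin d) ℂ) :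
    tensorId d Φ (Matrix.vecMulVec (fun p => if p.1 = p.2 then 1 else 0)
      (star fun p => if p.1 = p.2 then 1 else 0)) = unnormChoi Φ := by
  ext ⟨i, a⟩ ⟨j, b⟩
  simp only [tensorId, unnormChoi, Matrix.of_apply]
  congr 1
  ext k l
  simp [Matrix.vecMulVec_apply, Matrix.single_apply, apply_ite (star : ℂ → ℂ), ite_and]
  split_ifs <;> rfl

theorem choiMatrix_eq_smul (Φ : Matrix (Fin d) (Fin d) ℂ →ₗ[ℂ] Matrix (Fin d) (Fin d) ℂ) :
    choiMatrix (fun ρ => Φ ρ) = (1 / d : ℂ) • unnormChoi (fun ρ => Φ ρ) := by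
  ext ⟨i, a⟩ ⟨j, b⟩
  have h : (fun k l => maxEnt d (i, k) (j, l)) = (1 / d : ℂ) • Matrix.single i j (1 : ℂ) := by
    ext k l
    simp [maxEnt, Matrix.single_apply]
  simp only [choiMatrix, tensorId, h, map_smul]
  simp [unnormChoi]

theorem posSemidef_unnormChoi {Φ : Matrix (Fin d) (Fin d) ℂ → Matrix (Fin d) (Fin d) ℂ}
    (h : CompletelyPositive Φ) : (unnormChoi Φ).PosSemidef := by
  rcases Nat.eq_zero_or_pos d with rfl | hd
  · rw [Subsingleton.elim (unnormChoi Φ) 0]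
    exact Matrix.PosSemidef.zero
  · rw [← tensorId_eq_unnormChoi]
    exact h d hd _ (Matrix.posSemidef_vecMulVec_self_star _)

theorem completelyPositive_transpose_of_entBreaking
    {Φ : Matrix (Fin d) (Fin d) ℂ → Matrix (Fin d) (Fin d) ℂ} (h : EntBreaking Φ) :
    CompletelyPositive (fun ρ => (Φ ρ)ᵀ) := by
  intro n hn Γ hΓ
  obtain ⟨N, A, B, hA, hB, hAB⟩ := h n hn Γ hΓ
  have : tensorId n (fun ρ => (Φ ρ)ᵀ) Γ = ∑ s, A s ⊗ₖ (B s)ᵀ := by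
    ext ⟨i, a⟩ ⟨j, b⟩
    have := congrFun (congrFun hAB (i, b)) (j, a)
    simp only [Matrix.sum_apply, Matrix.kroneckerMap_apply, Matrix.transpose_apply] at this ⊢
    exact this
  rw [this]
  exact Matrix.posSemidef_sum _ fun s _ => (hA s).kronecker (hB s).transpose

/-- A separable Choi matrix puts `Φ` in the measure-and-prepare form
`Φ X = ∑ s, (∑ i j, v s i * star (v s j) * X i j) • p s`, which breaks entanglement. -/
theorem entBreaking_of_decomposition
    (Φ : Matrix (Fin d) (Fin d) ℂ →ₗ[ℂ] Matrix (Fin d) (Fin d) ℂ) {N : ℕ}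
    {v : Fin N → Fin d → ℂ} {p : Fin N → Matrix (Fin d) (Fin d) ℂ}
    (hp : ∀ s, (p s).PosSemidef)
    (h : ∀ i a j b, unnormChoi (fun ρ => Φ ρ) (i, a) (j, b) =
      ∑ s, (v s i * star (v s j)) * p s a b) : EntBreaking (fun ρ => Φ ρ) := by
  intro n _ Γ hΓ
  -- `V s` is the identity on the first factor tensored with the row vector `v s`.
  let V : Fin N → Matrix (Fin n) (Fin n × Fin d) ℂ := fun s =>
    Matrix.of fun k q => if q.1 = k then v s q.2 else 0
  refine ⟨N, fun s => V s * Γ * (V s)ᴴ, p, fun s => hΓ.mul_mul_conjTranspose_same _, hp, ?_⟩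
  have hV : ∀ s k l, (V s * Γ * (V s)ᴴ) k l =
      ∑ i, ∑ j, v s i * star (v s j) * Γ (k, i) (l, j) := by
    intro s k l
    simp [V, Matrix.mul_apply, Fintype.sum_prod_type, Finset.sum_mul, apply_ite (star : ℂ → ℂ)]
    rw [Finset.sum_comm]
    simp only [mul_right_comm]
  ext ⟨k, a⟩ ⟨l, b⟩
  have hΦ : ∀ X : Matrix (Fin d) (Fin d) ℂ,
      Φ X a b = ∑ i, ∑ j, X i j * unnormChoi (fun ρ => Φ ρ) (i, a) (j, b) := by
    intro X
    conv_lhs => rw [Matrix.matrix_eq_sum_single X]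
    simp only [map_sum, Matrix.sum_apply, unnormChoi, Matrix.of_apply]
    refine Finset.sum_congr rfl fun i _ => Finset.sum_congr rfl fun j _ => ?_
    have : Matrix.single i j (X i j) = X i j • Matrix.single i j (1 : ℂ) := by simp
    rw [this, map_smul, Matrix.smul_apply, smul_eq_mul]
  refine (hΦ (fun i j => Γ (k, i) (l, j))).trans ?_
  simp only [h, Matrix.sum_apply, Matrix.kroneckerMap_apply, hV, Finset.mul_sum, Finset.sum_mul]
  symm
  rw [Finset.sum_comm]
  refine Finset.sum_congr rfl fun i _ => ?_
  rw [Finset.sum_comm]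
  refine Finset.sum_congr rfl fun j _ => Finset.sum_congr rfl fun s _ => ?_
  ring

theorem entBreaking_of_ppt
    (Φ : Matrix (Fin d) (Fin d) ℂ →ₗ[ℂ] Matrix (Fin d) (Fin d) ℂ)
    (hcp : CompletelyPositive (fun ρ => Φ ρ))
    (htp : TracePreserving (fun ρ => Φ ρ))
    (hrank : (choiMatrix (fun ρ => Φ ρ)).rank = d)
    (hppt : CompletelyPositive (fun ρ => (Φ ρ)ᵀ)) : EntBreaking (fun ρ => Φ ρ) := by
  set J := unnormChoi (fun ρ => Φ ρ) with hJdef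
  have hJ : J.PosSemidef := posSemidef_unnormChoi hcp
  -- Post-composing `Φ` with the transpose amounts to partial transposition of `J`.
  have hG : (pTranspose J).PosSemidef := posSemidef_unnormChoi hppt
  have htr : ∀ i j, ∑ a, J (i, a) (j, a) = if i = j then 1 else 0 := by
    intro i j
    refine (htp (Matrix.single i j 1)).trans ?_
    split_ifs with hij
    · rw [hij, Matrix.trace_single_eq_same]
    · exact Matrix.trace_single_eq_of_ne _ _ _ hij
  have htrG : ∀ i j, ∑ a, pTranspose J (i, a) (j, a) = if i = j then 1 else 0 := htr
  have hJ1 : (1 - J).PosSemidef := one_sub_posSemidef_of_pTranspose htr hG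
  have hG1 : (1 - pTranspose J).PosSemidef := one_sub_posSemidef_of_pTranspose htrG hJ
  have hrk : J.trace = J.rank := by
    have hr : J.rank = d := by
      rcases Nat.eq_zero_or_pos d with rfl | hd
      · exact le_antisymm (by simpa using J.rank_le_card_width) (Nat.zero_le _)
      · rw [choiMatrix_eq_smul, Matrix.rank_smul_of_mem_nonZeroDivisors] at hrank
        · exact hrank
        · simpa using hd.ne'
    rw [hr, Matrix.trace, Fintype.sum_prod_type]
    simp [Matrix.diag, htr]
  have hJJ : J * J = J := idem_of_trace_eq_rank hJ hJ1 hrk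
  have hGG := pTranspose_idem hJJ hG hG1
  have hstar : ∀ a b, (blk J a b)ᴴ = blk J b a := by
    intro a b
    ext i j
    simpa [blk] using hJ.1.apply (i, b) (j, a)
  have hone : ∑ a, blk J a a = 1 := by
    ext i j
    simp [Matrix.sum_apply, blk, htr, Matrix.one_apply]
  have hex := exchange hstar (blk_sum_mul hJJ) (fun a c => blk_sum_mul hGG a c) hone
  obtain ⟨v, p, hp, h⟩ := exists_spectral_blocks hJ (blocks_commute hstar hex)
  exact entBreaking_of_decomposition Φ hp h

end Choi

/-- Lemma 1: a CPT map whose Choi matrix has rank `d` is entanglement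
breaking iff `T ∘ Φ` is completely positive, where `T` is the transpose map. -/
theorem rank_d_entanglement_breaking_iff_ppt
    {d : ℕ} (Φ : Matrix (Fin d) (Fin d) ℂ →ₗ[ℂ] Matrix (Fin d) (Fin d) ℂ)
    (hcp : CompletelyPositive (fun ρ => Φ ρ))
    (htp : TracePreserving (fun ρ => Φ ρ))
    (hrank : (choiMatrix (fun ρ => Φ ρ)).rank = d) :
    EntBreaking (fun ρ => Φ ρ) ↔
      CompletelyPositive (fun ρ => (Φ ρ)ᵀ) := by
  exact ⟨completelyPositive_transpose_of_entBreaking, entBreaking_of_ppt Φ hcp htp hrank⟩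
end
end

section
/- Let ρ be a separable density matrix on ℂ^{d_A} ⊗ ℂ^{d_B} (i.e. a positive semidefinite matrix of trace 1 indexed by (Fin d_A × Fin d_B) that is a finite convex combination of Kronecker products of pure states |a⟩⟨a| ⊗ |b⟩⟨b| with a, b unit vectors). If rank(ρ) = r and the reduced density matrix ρ_A = Tr_B(ρ) also has rank r, then ρ can be written as a convex combination of at most r products of pure states: there exist λ_1, …, λ_r ≥ 0 with Σλ_i = 1 and unit vectors a_i ∈ ℂ^{d_A}, b_i ∈ ℂ^{d_B} such that ρ = Σ_{i=1}^r λ_i |a_i⟩⟨a_i| ⊗ |b_i⟩⟨b_i|. (Lemma 2.) -/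
/-! Absorb the weights into `x i = √(μ i) • a i`, so that `ρ = ∑ |x i⟩⟨x i| ⊗ |b i⟩⟨b i|` and
`ρ_A = ∑ |x i⟩⟨x i|`.  The rank of `ρ` is the dimension of the span of the `x i ⊗ b i`, and the
rank of `ρ_A` is the dimension of the span of the `x i`.  Choose `r` indices `e j` for which the
`x (e j)` form a basis of the latter span.  Then the `x (e j) ⊗ b (e j)` are independent, hence
form a basis of the former span, which also has dimension `r`.  Expanding `x i ⊗ b i` in this basis
and comparing coefficients of the `x (e j)` shows that `x i` only involves those `x (e j)` for
which `b (e j)` is parallel to `b i`, i.e. has the same projector (`mem_parallel`).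

Grouping the terms by the projector `Q = |b i⟩⟨b i|` gives `ρ = ∑ Q, M Q ⊗ Q`, where
`M Q` is a sum of `|x i⟩⟨x i|` with all `x i` in the span of the basis vectors of the class of `Q`.
A positive semidefinite square root rewrites `M Q` with one rank-one term per such basis vector
(`rankOne_sum_reduce`), which makes `r` terms altogether. Normalising these vectors gives the
weights, whose sum is the trace of `ρ`. -/

open Matrix Kronecker BigOperators ComplexOrder

noncomputable section

/-- The partial trace over the second factor. -/
def partialTraceB {dA dB : ℕ} (ρ : Matrix (Fin dA × Fin dB) (Fin dA × Fin dB) ℂ) :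
    Matrix (Fin dA) (Fin dA) ℂ :=
  fun i j => ∑ b, ρ (i, b) (j, b)

lemma rankOne_smul {d : ℕ} (t : ℂ) (v : Fin d → ℂ) :
    rankOne (t • v) = (t * star t) • rankOne v := by
  ext p q
  simp [rankOne, vecMulVec_apply]
  ring

lemma sum_rankOne_eq {d : ℕ} {ι : Type*} [Fintype ι] (x : ι → Fin d → ℂ) :
    ∑ i, rankOne (x i) = (Matrix.of fun p i => x i p) * (Matrix.of fun p i => x i p)ᴴ := by
  ext p q
  simp [rankOne, vecMulVec_apply, Matrix.mul_apply, Matrix.sum_apply]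

open scoped MatrixOrder Matrix.Norms.L2Operator in
/-- If all `x i` are combinations of the vectors `z j`, `j ∈ κ`, then `∑ |x i⟩⟨x i|` is a sum of
`|κ|` rank-one terms: with `X = Z C`, replace `C` by a square factor of `C Cᴴ`. -/
lemma rankOne_sum_reduce {d : ℕ} {ι κ : Type*} [Fintype ι] [Fintype κ]
    (x : ι → Fin d → ℂ) (z : κ → Fin d → ℂ) (c : ι → κ → ℂ)
    (h : ∀ i, x i = ∑ j, c i j • z j) :
    ∃ y : κ → Fin d → ℂ, ∑ i, rankOne (x i) = ∑ j, rankOne (y j) := by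
  classical
  let C : Matrix κ ι ℂ := Matrix.of fun j i => c i j
  let Z : Matrix (Fin d) κ ℂ := Matrix.of fun p j => z j p
  have hX : (Matrix.of fun p i => x i p) = Z * C := by
    ext p i
    simp [h, Z, C, Matrix.mul_apply, mul_comm]
  obtain ⟨S, hS⟩ : ∃ S : Matrix κ κ ℂ, C * Cᴴ = S * Sᴴ := by
    obtain ⟨B, hB⟩ := (CStarAlgebra.nonneg_iff_eq_mul_star_self).mp
      (Matrix.posSemidef_self_mul_conjTranspose C).nonneg
    exact ⟨B, hB⟩
  refine ⟨fun j p => (Z * S) p j, ?_⟩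
  rw [sum_rankOne_eq, sum_rankOne_eq, hX]
  have : (Matrix.of fun p j => (Z * S) p j) = Z * S := rfl
  rw [this, conjTranspose_mul, conjTranspose_mul, Matrix.mul_assoc, ← Matrix.mul_assoc C, hS]
  simp only [Matrix.mul_assoc]

lemma rank_sum_rankOne {m ι : Type*} [Fintype m] [Fintype ι] (z : ι → m → ℂ) :
    (∑ i, vecMulVec (z i) (star (z i))).rank =
      Module.finrank ℂ (Submodule.span ℂ (Set.range z)) := by
  have : ∑ i, vecMulVec (z i) (star (z i))
      = (Matrix.of fun p i => z i p) * (Matrix.of fun p i => z i p)ᴴ := by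
    ext p q
    simp [vecMulVec_apply, Matrix.mul_apply, Matrix.sum_apply]
  rw [this, Matrix.rank_self_mul_conjTranspose, Matrix.rank_eq_finrank_span_cols]
  rfl

/-- If the `x (e j)` are independent and `x i ⊗ b i` lies in the span of the
`x (e j) ⊗ b (e j)`, then `x i` is a combination of those `x (e j)` whose partner `b (e j)` has
the same projector as `b i`. -/
lemma mem_parallel {dA dB : ℕ} {κ : Type*} [Fintype κ]
    (x : κ → Fin dA → ℂ) (b : κ → Fin dB → ℂ) (hx : LinearIndependent ℂ x)
    (hb : ∀ j, star (b j) ⬝ᵥ b j = 1)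
    (u : Fin dA → ℂ) (w : Fin dB → ℂ) (hw : star w ⬝ᵥ w = 1)
    (d : κ → ℂ) (hd : ∀ p q, u p * w q = ∑ j, d j * (x j p * b j q)) :
    ∃ c : κ → ℂ, u = ∑ j, c j • x j ∧ ∀ j, c j ≠ 0 → rankOne (b j) = rankOne w := by
  obtain ⟨q0, hq0⟩ : ∃ q, w q ≠ 0 := by
    by_contra! h
    have : w = 0 := funext h
    simp [this] at hw
  have hu : u = ∑ j, (d j * b j q0 / w q0) • x j := by
    ext p
    have := hd p q0
    rw [← eq_div_iff hq0] at this
    rw [this, Finset.sum_div]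
    simp only [Finset.sum_apply, Pi.smul_apply, smul_eq_mul]
    exact Finset.sum_congr rfl fun j _ => by ring
  refine ⟨_, hu, fun j hj => ?_⟩
  have key : ∀ q, d j * b j q0 / w q0 * w q = d j * b j q := by
    intro q
    have := Fintype.linearIndependent_iff.mp hx
      (fun j => d j * b j q0 / w q0 * w q - d j * b j q) (by
        ext p
        have h1 := hd p q
        rw [hu] at h1
        simp only [Finset.sum_apply, Pi.smul_apply, smul_eq_mul, Finset.sum_mul] at h1
        simp only [Finset.sum_apply, Pi.smul_apply, smul_eq_mul, Pi.zero_apply, sub_mul,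
          Finset.sum_sub_distrib]
        rw [sub_eq_zero]
        convert h1 using 2 <;> ring) j
    exact sub_eq_zero.mp this
  set t := d j * b j q0 / w q0 with ht
  have hwt : w = (d j / t) • b j := by
    ext q
    have := key q
    simp only [Pi.smul_apply, smul_eq_mul]
    field_simp
    rw [mul_comm]; linear_combination this
  -- Both vectors are unit vectors, so the proportionality factor is a phase.
  have hs : (d j / t) * star (d j / t) = 1 := by
    have h2 := hw
    rw [hwt, star_smul, smul_dotProduct, dotProduct_smul, hb j] at h2
    simpa [mul_comm] using h2
  rw [hwt, rankOne_smul, hs, one_smul]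

lemma sum_kron {m n ι : Type*} [Fintype ι] (A : ι → Matrix m m ℂ) (B : Matrix n n ℂ) :
    (∑ i, A i) ⊗ₖ B = ∑ i, A i ⊗ₖ B := by
  ext p q
  simp [kroneckerMap_apply, Matrix.sum_apply, Finset.sum_mul]

/-- Reduction of a separable sum to the size of a subfamily `e`, given that each `x i` is a
combination of the `x (e j)` attached to the same second factor `P (e j) = P i`. -/
lemma group_reduce {dA dB N r : ℕ} (x : Fin N → Fin dA → ℂ)
    (P : Fin N → Matrix (Fin dB) (Fin dB) ℂ) (e : Fin r → Fin N)
    (c : Fin N → Fin r → ℂ) (hc : ∀ i, x i = ∑ j, c i j • x (e j))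
    (hP : ∀ i j, c i j ≠ 0 → P (e j) = P i) :
    ∃ y : Fin r → Fin dA → ℂ,
      ∑ i, rankOne (x i) ⊗ₖ P i = ∑ j, rankOne (y j) ⊗ₖ P (e j) := by
  classical
  have hQ : ∀ Q, ∃ y : {j // P (e j) = Q} → Fin dA → ℂ,
      ∑ i : {i // P i = Q}, rankOne (x i) = ∑ j, rankOne (y j) := by
    intro Q
    refine rankOne_sum_reduce (fun i : {i // P i = Q} => x i)
      (fun j : {j // P (e j) = Q} => x (e j)) (fun i j => c i j) fun i => ?_
    rw [← Finset.sum_subtype (Finset.univ.filter fun j => P (e j) = Q) (by simp)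
      (fun j => c i j • x (e j)), Finset.sum_filter, hc i]
    refine Finset.sum_congr rfl fun j _ => ?_
    split_ifs with h
    · rfl
    · have h0 : c i j = 0 := by
        by_contra hne
        exact h ((hP i j hne).trans i.2)
      rw [h0, zero_smul]
  choose y hy using hQ
  refine ⟨fun j => y (P (e j)) ⟨j, rfl⟩, ?_⟩
  have hL := Finset.sum_fiberwise_of_maps_to (s := Finset.univ) (t := Finset.univ.image P)
    (g := P) (fun i _ => Finset.mem_image_of_mem P (Finset.mem_univ i))
    (fun i => rankOne (x i) ⊗ₖ P i)
  have hR := Finset.sum_fiberwise_of_maps_to (s := Finset.univ) (t := Finset.univ.image P)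
    (g := fun j => P (e j)) (fun j _ => Finset.mem_image_of_mem P (Finset.mem_univ (e j)))
    (fun j => rankOne (y (P (e j)) ⟨j, rfl⟩) ⊗ₖ P (e j))
  rw [← hL, ← hR]
  refine Finset.sum_congr rfl fun Q _ => ?_
  have h1 : ∑ i with P i = Q, rankOne (x i) ⊗ₖ P i
      = (∑ i : {i // P i = Q}, rankOne (x i)) ⊗ₖ Q := by
    rw [Finset.sum_subtype (Finset.univ.filter fun i => P i = Q) (p := fun i => P i = Q) (by simp),
      sum_kron]
    exact Finset.sum_congr rfl fun i _ => by rw [i.2]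
  have h2 : ∑ j with P (e j) = Q, rankOne (y (P (e j)) ⟨j, rfl⟩) ⊗ₖ P (e j)
      = (∑ j, rankOne (y Q j)) ⊗ₖ Q := by
    rw [Finset.sum_subtype (Finset.univ.filter fun j => P (e j) = Q)
      (p := fun j => P (e j) = Q) (by simp), sum_kron]
    refine Finset.sum_congr rfl fun j _ => ?_
    obtain ⟨j, rfl⟩ := j
    rfl
  rw [h1, h2, hy]

/-- Lemma 2: a separable state `ρ` with `rank ρ = rank ρ_A = r` is a
convex combination of at most `r` products of pure states. -/
theorem separable_rank_r_decomposition
    {dA dB : ℕ} (ρ : Matrix (Fin dA × Fin dB) (Fin dA × Fin dB) ℂ)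
    (hpsd : ρ.PosSemidef) (htr : ρ.trace = 1)
    (hsep : ∃ (N : ℕ) (μ : Fin N → ℝ)
        (a : Fin N → (Fin dA → ℂ)) (b : Fin N → (Fin dB → ℂ)),
        (∀ i, 0 ≤ μ i) ∧ (∑ i, μ i) = 1 ∧
        (∀ i, star (a i) ⬝ᵥ a i = 1) ∧ (∀ i, star (b i) ⬝ᵥ b i = 1) ∧
        ρ = ∑ i, ((μ i : ℂ)) • (rankOne (a i) ⊗ₖ rankOne (b i)))
    (r : ℕ) (hrank : ρ.rank = r) (hrankA : (partialTraceB ρ).rank = r) :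
    ∃ (lam : Fin r → ℝ) (a : Fin r → (Fin dA → ℂ)) (b : Fin r → (Fin dB → ℂ)),
      (∀ i, 0 ≤ lam i) ∧ (∑ i, lam i) = 1 ∧
      (∀ i, star (a i) ⬝ᵥ a i = 1) ∧ (∀ i, star (b i) ⬝ᵥ b i = 1) ∧
      ρ = ∑ i, ((lam i : ℂ)) • (rankOne (a i) ⊗ₖ rankOne (b i)) := by
  obtain ⟨N, μ, a, b, hμ, hμ1, ha, hb, hρ⟩ := hsep
  classical
  set x : Fin N → Fin dA → ℂ := fun i => ((Real.sqrt (μ i) : ℝ) : ℂ) • a i with hx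
  have hxr : ∀ i, rankOne (x i) = (μ i : ℂ) • rankOne (a i) := by
    intro i
    rw [hx, rankOne_smul]
    congr 1
    rw [Complex.star_def, Complex.conj_ofReal, ← Complex.ofReal_mul, Real.mul_self_sqrt (hμ i)]
  have hρ' : ρ = ∑ i, rankOne (x i) ⊗ₖ rankOne (b i) := by
    rw [hρ]
    exact Finset.sum_congr rfl fun i _ => by rw [hxr, smul_kronecker]
  have hz : ρ = ∑ i, vecMulVec (fun p : Fin dA × Fin dB => x i p.1 * b i p.2)
      (star fun p : Fin dA × Fin dB => x i p.1 * b i p.2) := by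
    rw [hρ']
    refine Finset.sum_congr rfl fun i _ => ?_
    ext p q
    simp [rankOne, vecMulVec_apply, kroneckerMap_apply]
    ring
  have hA : partialTraceB ρ = ∑ i, vecMulVec (x i) (star (x i)) := by
    ext p q
    rw [hρ']
    simp only [partialTraceB, Matrix.sum_apply]
    rw [Finset.sum_comm]
    refine Finset.sum_congr rfl fun i _ => ?_
    have h1 : ∑ k, b i k * star (b i k) = 1 := by
      rw [← hb i]
      exact Finset.sum_congr rfl fun k _ => mul_comm _ _
    simp only [kroneckerMap_apply, rankOne, vecMulVec_apply, Pi.star_apply]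
    rw [← Finset.mul_sum, h1, mul_one]
  rw [hz, rank_sum_rankOne] at hrank
  rw [hA, rank_sum_rankOne] at hrankA
  obtain ⟨e, hspan, hli⟩ : ∃ e : Fin r → Fin N,
      Submodule.span ℂ (Set.range (x ∘ e)) = Submodule.span ℂ (Set.range x) ∧
      LinearIndependent ℂ (x ∘ e) := by
    obtain ⟨κ, f, hf, hs, hl⟩ := exists_linearIndependent' ℂ x
    have : Finite κ := Finite.of_injective f hf
    have := Fintype.ofFinite κ
    have hcard : Fintype.card κ = r := by
      rw [← hrankA, ← hs, finrank_span_eq_card hl]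
    let g := (Fintype.equivFinOfCardEq hcard).symm
    refine ⟨f ∘ g, ?_, ?_⟩
    · rw [← hs, ← Function.comp_assoc, g.surjective.range_comp]
    · exact hl.comp g g.injective
  set z : Fin N → Fin dA × Fin dB → ℂ := fun i p => x i p.1 * b i p.2 with hzdef
  have hzli : LinearIndependent ℂ (z ∘ e) := by
    rw [Fintype.linearIndependent_iff]
    intro d hd j
    have h1 : ∀ q, d j * b (e j) q = 0 := by
      intro q
      refine Fintype.linearIndependent_iff.mp hli (fun j => d j * b (e j) q) ?_ j
      ext p
      have := congrFun hd (p, q)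
      simp only [Finset.sum_apply, Pi.smul_apply, smul_eq_mul, Function.comp_apply, hzdef,
        Pi.zero_apply] at this ⊢
      rw [← this]
      exact Finset.sum_congr rfl fun j _ => by ring
    by_contra hne
    have h2 : b (e j) = 0 := funext fun q => (mul_eq_zero.mp (h1 q)).resolve_left hne
    have := hb (e j)
    simp [h2] at this
  have hzspan : Submodule.span ℂ (Set.range (z ∘ e)) = Submodule.span ℂ (Set.range z) := by
    refine Submodule.eq_of_le_of_finrank_eq
      (Submodule.span_mono (Set.range_comp_subset_range e z)) ?_
    rw [finrank_span_eq_card hzli, Fintype.card_fin, hrank]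
  have hcoef : ∀ i, ∃ c : Fin r → ℂ, x i = ∑ j, c j • x (e j) ∧
      ∀ j, c j ≠ 0 → rankOne (b (e j)) = rankOne (b i) := by
    intro i
    have hmem : z i ∈ Submodule.span ℂ (Set.range (z ∘ e)) := by
      rw [hzspan]
      exact Submodule.subset_span ⟨i, rfl⟩
    obtain ⟨d, hd⟩ := (Submodule.mem_span_range_iff_exists_fun ℂ).mp hmem
    refine mem_parallel (fun j => x (e j)) (fun j => b (e j)) hli (fun j => hb _) (x i) (b i)
      (hb i) d fun p q => ?_
    have := congrFun hd (p, q)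
    simp only [Finset.sum_apply, Pi.smul_apply, smul_eq_mul, Function.comp_apply, hzdef] at this
    exact this.symm
  choose c hc hcP using hcoef
  obtain ⟨y, hy⟩ := group_reduce x (fun i => rankOne (b i)) e c hc hcP
  rw [← hρ'] at hy
  obtain ⟨i0⟩ : Nonempty (Fin N) := by
    by_contra h
    rw [not_nonempty_iff] at h
    simp at hμ1
  have hnorm : ∀ v : Fin dA → ℂ, ∃ (l : ℝ) (w : Fin dA → ℂ), 0 ≤ l ∧ star w ⬝ᵥ w = 1 ∧
      rankOne v = (l : ℂ) • rankOne w := by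
    intro v
    -- A zero vector gets weight `0` and an arbitrary unit vector.
    by_cases hv : v = 0
    · exact ⟨0, a i0, le_rfl, ha i0, by ext; simp [hv, rankOne, vecMulVec_apply]⟩
    obtain ⟨l, hl, hlv⟩ : ∃ l : ℝ, 0 < l ∧ star v ⬝ᵥ v = (l : ℂ) := by
      have h0 : 0 < star v ⬝ᵥ v := dotProduct_star_self_pos_iff.mpr hv
      obtain ⟨h1, h2⟩ := Complex.pos_iff.mp h0
      exact ⟨_, h1, Complex.ext rfl (by simp [← h2])⟩
    have hsq : (((Real.sqrt l)⁻¹ : ℝ) : ℂ) * (((Real.sqrt l)⁻¹ : ℝ) : ℂ) = (l : ℂ)⁻¹ := by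
      rw [← Complex.ofReal_mul, ← mul_inv, Real.mul_self_sqrt hl.le, Complex.ofReal_inv]
    have hlc : (l : ℂ) ≠ 0 := by exact_mod_cast hl.ne'
    refine ⟨l, (((Real.sqrt l)⁻¹ : ℝ) : ℂ) • v, hl.le, ?_, ?_⟩
    · rw [star_smul, smul_dotProduct, dotProduct_smul, hlv, Complex.star_def, Complex.conj_ofReal,
        smul_smul, hsq, smul_eq_mul, inv_mul_cancel₀ hlc]
    · rw [rankOne_smul, Complex.star_def, Complex.conj_ofReal, hsq, smul_smul,
        mul_inv_cancel₀ hlc, one_smul]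
  choose l w hl hw hlw using hnorm
  have hfin : ρ = ∑ j, ((l (y j) : ℂ)) • (rankOne (w (y j)) ⊗ₖ rankOne (b (e j))) := by
    rw [hy]
    exact Finset.sum_congr rfl fun j _ => by rw [hlw (y j), smul_kronecker]
  refine ⟨fun j => l (y j), fun j => w (y j), fun j => b (e j), fun j => hl _, ?_,
    fun j => hw _, fun j => hb _, hfin⟩
  have htr1 : ∀ {d : ℕ} (v : Fin d → ℂ), star v ⬝ᵥ v = 1 → (rankOne v).trace = 1 := by
    intro d v hv
    rw [rankOne, trace_vecMulVec, dotProduct_comm, hv]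
  rw [hfin, trace_sum] at htr
  simp only [trace_smul, trace_kronecker, htr1 _ (hw _), htr1 _ (hb _), smul_eq_mul,
    mul_one] at htr
  exact_mod_cast htr
end
end
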